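/- arXiv:2309.15404 — 3 statements merged into one kernel-verified Lean document; each statement's English description precedes it below -/
import Mathlib

section
/- Let A = ⊕_{i≥0} A_i be a finitely generated graded k-algebra of Krull dimension r which is an integral domain, and suppose A is saturated, i.e. dim_k A_i ≠ 0 for all sufficiently large i. Then dim_k A_i = Vol(A)·i^{r-1}/(r-1)! + O(i^{r-2}) as i → ∞, where Vol(A) := lim_{t→1} (1-t)^r H_A(t). -/
open Filter Asymptotics

/-!
Over an infinite field, homogeneous Noether normalization makes `R` finite over a polynomial ring
`P` in `r` elements of one common degree `d`. A maximal `P`-linearly independent family of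
homogeneous elements of one degree spans a free graded submodule which contains `b • 𝒜 (m * d)`
for all `m` and some `b ≠ 0` in `P`; comparing dimensions, `dim 𝒜 (m * d)` lies between two shifts
of the Hilbert function of the free module, so it is polynomial in `m` of degree `r - 1` up to a
lower order error. Multiplication by a nonzero homogeneous element, available in every large degree
by saturation, makes the Hilbert function monotone up to a bounded shift, which carries the estimate
from multiples of `d` to all degrees. Comparing `∑ dim 𝒜 i * t ^ i` with
`∑ (i + r - 1).choose (r - 1) * t ^ i = (1 - t) ^ (-r)` identifies the leading coefficient.
-/

section LinearSubstitution

variable {σ k S : Type*} [CommSemiring k] [CommSemiring S] [Algebra k S]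

theorem natDegree_prod_pow_le_and_coeff {L : σ → Polynomial S} (hL : ∀ i, (L i).natDegree ≤ 1)
    (e : σ →₀ ℕ) :
    (e.prod fun i n => L i ^ n).natDegree ≤ e.degree ∧
      (e.prod fun i n => L i ^ n).coeff e.degree = e.prod fun i n => (L i).coeff 1 ^ n := by
  induction e using Finsupp.induction_linear with
  | zero => simp
  | add f g hf hg =>
    simp only [Finsupp.prod_add_index', pow_zero, pow_add, implies_true, map_add]
    exact ⟨Polynomial.natDegree_mul_le.trans (add_le_add hf.1 hg.1), by
      rw [Polynomial.coeff_mul_add_eq_of_natDegree_le hf.1 hg.1, hf.2, hg.2]⟩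
  | single i n =>
    simp only [pow_zero, Finsupp.prod_single_index, Finsupp.degree_single]
    exact ⟨by simpa using Polynomial.natDegree_pow_le_of_le n (hL i),
      by simpa using Polynomial.coeff_pow_of_natDegree_le (m := n) (hL i)⟩

theorem natDegree_aeval_le_of_isHomogeneous {F : MvPolynomial σ k} {m : ℕ} (hF : F.IsHomogeneous m)
    {L : σ → Polynomial S} (hL : ∀ i, (L i).natDegree ≤ 1) :
    (MvPolynomial.aeval L F).natDegree ≤ m := by
  rw [MvPolynomial.aeval_def, MvPolynomial.eval₂_eq]
  refine Polynomial.natDegree_sum_le_of_forall_le _ _ fun e he => ?_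
  rw [hF.degree_eq_sum_deg_support he, ← Finsupp.degree_apply, Polynomial.algebraMap_apply]
  exact (Polynomial.natDegree_C_mul_le _ _).trans (natDegree_prod_pow_le_and_coeff hL e).1

theorem coeff_aeval_of_isHomogeneous {F : MvPolynomial σ k} {m : ℕ} (hF : F.IsHomogeneous m)
    {L : σ → Polynomial S} (hL : ∀ i, (L i).natDegree ≤ 1) :
    (MvPolynomial.aeval L F).coeff m = MvPolynomial.aeval (fun i => (L i).coeff 1) F := by
  rw [MvPolynomial.aeval_def, MvPolynomial.eval₂_eq, Polynomial.finsetSum_coeff,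
    MvPolynomial.aeval_def, MvPolynomial.eval₂_eq]
  refine Finset.sum_congr rfl fun e he => ?_
  rw [hF.degree_eq_sum_deg_support he, ← Finsupp.degree_apply, Polynomial.algebraMap_apply,
    Polynomial.coeff_C_mul]
  exact congrArg _ (natDegree_prod_pow_le_and_coeff hL e).2

end LinearSubstitution

-- As a polynomial in `y`, `F (w + a y)` has leading coefficient `F a`.
theorem isIntegral_of_aeval_add_smul_eq_zero {σ k B R : Type*} [CommRing k] [CommRing B]
    [CommRing R] [Algebra k B] [Algebra k R] [Algebra B R] [IsScalarTower k B R]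
    {F : MvPolynomial σ k} {m : ℕ} (hF : F.IsHomogeneous m) {w : σ → B} {a : σ → k} {y : R}
    (ha : IsUnit (MvPolynomial.eval a F))
    (h : MvPolynomial.aeval (fun i => algebraMap B R (w i) + a i • y) F = 0) :
    IsIntegral B y := by
  set L : σ → Polynomial B := fun i =>
    Polynomial.C (w i) + Polynomial.C (algebraMap k B (a i)) * Polynomial.X
  have hL (i : σ) : (L i).natDegree ≤ 1 := by simp only [L]; compute_degree
  set G : Polynomial B := MvPolynomial.aeval L F
  have hroot : Polynomial.aeval y G = 0 := by
    have hcomp : ((Polynomial.aeval (R := B) y).restrictScalars k).comp (MvPolynomial.aeval L) =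
        MvPolynomial.aeval (fun i => algebraMap B R (w i) + a i • y) := by
      ext i
      simp [L, Algebra.smul_def, ← IsScalarTower.algebraMap_apply]
    exact (DFunLike.congr_fun hcomp F).trans h
  have hcoeff : G.coeff m = algebraMap k B (MvPolynomial.eval a F) := by
    have hL1 : (fun i => (L i).coeff 1) = fun i => algebraMap k B (a i) := by
      ext i; simp [L, Polynomial.coeff_C]
    rw [coeff_aeval_of_isHomogeneous hF hL, hL1]
    exact MvPolynomial.aeval_algebraMap_apply B a F
  obtain ⟨u, hu⟩ := ha.map (algebraMap k B)
  refine ⟨Polynomial.C (↑u⁻¹ : B) * G, ?_, ?_⟩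
  · refine Polynomial.monic_of_natDegree_le_of_coeff_eq_one m
      ((Polynomial.natDegree_C_mul_le _ _).trans (natDegree_aeval_le_of_isHomogeneous hF hL)) ?_
    rw [Polynomial.coeff_C_mul, hcoeff, ← hu, Units.inv_mul]
  · rw [← Polynomial.aeval_def, map_mul, hroot, mul_zero]

theorem isIntegral_of_isIntegral_adjoin {k R : Type*} [CommRing k] [CommRing R] [Algebra k R]
    (B : Subalgebra k R) {Z : Set R} [Algebra.IsIntegral (Algebra.adjoin k Z) R]
    (hZ : ∀ z ∈ Z, IsIntegral B z) : Algebra.IsIntegral B R where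
  isIntegral x := by
    have hle : Algebra.adjoin k Z ≤ (integralClosure B R).restrictScalars k :=
      Algebra.adjoin_le hZ
    let _ : Algebra (Algebra.adjoin k Z) (integralClosure B R) :=
      (Subalgebra.inclusion hle).toRingHom.toAlgebra
    have : IsScalarTower (Algebra.adjoin k Z) (integralClosure B R) R :=
      IsScalarTower.of_algebraMap_eq' rfl
    have hx : IsIntegral (integralClosure B R) x :=
      IsIntegral.tower_top (Algebra.IsIntegral.isIntegral (R := Algebra.adjoin k Z) x)
    exact isIntegral_trans x hx

theorem ringKrullDim_eq_of_isIntegral_of_injective {A B : Type*} [CommRing A] [CommRing B]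
    [Algebra A B] [Algebra.IsIntegral A B] (hinj : Function.Injective (algebraMap A B)) :
    ringKrullDim B = ringKrullDim A := by
  refine le_antisymm (Order.krullDim_le_of_strictMono (PrimeSpectrum.comap (algebraMap A B))
    fun P Q hPQ => Ideal.IsIntegral.comap_lt_comap hPQ) (iSup_le fun l => ?_)
  obtain ⟨P, -, hP, hPl⟩ := Ideal.exists_ideal_over_prime_of_isIntegral l.head.asIdeal (⊥ : Ideal B)
    (by simp [Ideal.comap_bot_of_injective _ hinj])
  have : P.LiesOver l.head.asIdeal := ⟨hPl.symm⟩
  obtain ⟨l', hlen, -⟩ := Ideal.exists_ltSeries_of_hasGoingUp l P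
  exact hlen ▸ le_iSup (fun s : LTSeries (PrimeSpectrum B) => (s.length : WithBot ℕ∞)) l'

section GradedEvaluation

variable {k R σ : Type*} [CommSemiring k] [CommSemiring R] [Algebra k R] (𝒜 : ℕ → Submodule k R)
  [GradedAlgebra 𝒜] {φ : MvPolynomial σ k →ₐ[k] R} {d : ℕ}

theorem map_mem_of_isHomogeneous (hφ : ∀ i, φ (MvPolynomial.X i) ∈ 𝒜 d) {F : MvPolynomial σ k}
    {m : ℕ} (hF : F.IsHomogeneous m) : φ F ∈ 𝒜 (m * d) := by
  rw [MvPolynomial.aeval_unique φ, MvPolynomial.aeval_def, MvPolynomial.eval₂_eq]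
  refine Submodule.sum_mem _ fun e he => ?_
  rw [← Algebra.smul_def, hF.degree_eq_sum_deg_support he, Finset.sum_mul]
  exact Submodule.smul_mem _ _ (SetLike.prod_pow_mem_graded 𝒜 _ _ e fun i _ => hφ i)

theorem decompose_map_apply (hd : 0 < d) (hφ : ∀ i, φ (MvPolynomial.X i) ∈ 𝒜 d)
    (F : MvPolynomial σ k) (m : ℕ) :
    (DirectSum.decompose 𝒜 (φ F) (m * d) : R) = φ (MvPolynomial.homogeneousComponent m F) := by
  conv_lhs => rw [← MvPolynomial.sum_homogeneousComponent F]
  rw [map_sum, DirectSum.decompose_sum, DFinsupp.finsetSum_apply, AddSubmonoidClass.coe_finsetSum]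
  have hmem (i : ℕ) := map_mem_of_isHomogeneous 𝒜 hφ
    (MvPolynomial.homogeneousComponent_isHomogeneous i F)
  rw [Finset.sum_eq_single m]
  · exact DirectSum.decompose_of_mem_same 𝒜 (hmem m)
  · intro i _ hi
    exact DirectSum.decompose_of_mem_ne 𝒜 (hmem i) fun h => hi (Nat.eq_of_mul_eq_mul_right hd h)
  · intro hm
    rw [MvPolynomial.homogeneousComponent_eq_zero, map_zero, DirectSum.decompose_zero]
    · rfl
    · simpa using hm

end GradedEvaluation

theorem exists_homogeneousComponent_ne_zero {σ k : Type*} [CommSemiring k] {F : MvPolynomial σ k}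
    (hF : F ≠ 0) : ∃ m, MvPolynomial.homogeneousComponent m F ≠ 0 := by
  contrapose! hF
  rw [← MvPolynomial.sum_homogeneousComponent F]
  exact Finset.sum_eq_zero fun i _ => hF i

section NoetherNormalization

variable {k R : Type*} [CommRing R]

theorem exists_isHomogeneous_aeval_eq_zero {σ : Type*} [CommRing k] [Algebra k R]
    (𝒜 : ℕ → Submodule k R) [GradedAlgebra 𝒜] {z : σ → R} {d : ℕ} (hd : 0 < d)
    (hz : ∀ i, z i ∈ 𝒜 d) (hdep : ¬ AlgebraicIndependent k z) :
    ∃ (m : ℕ) (F : MvPolynomial σ k), F.IsHomogeneous m ∧ F ≠ 0 ∧ MvPolynomial.aeval z F = 0 := by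
  rw [algebraicIndependent_iff] at hdep
  push Not at hdep
  obtain ⟨F, hF, hF0⟩ := hdep
  obtain ⟨m, hm⟩ := exists_homogeneousComponent_ne_zero hF0
  refine ⟨m, _, MvPolynomial.homogeneousComponent_isHomogeneous m F, hm, ?_⟩
  rw [← decompose_map_apply 𝒜 hd (by simpa using hz), hF, DirectSum.decompose_zero]
  rfl

theorem exists_family_isIntegral_adjoin_of_finite_zero [CommRing k] [Algebra k R]
    (𝒜 : ℕ → Submodule k R) [GradedAlgebra 𝒜] [Algebra.FiniteType k R] [Module.Finite k (𝒜 0)] :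
    ∃ (d n : ℕ) (z : Fin n → R), 0 < d ∧ (∀ i, z i ∈ 𝒜 d) ∧
      Algebra.IsIntegral (Algebra.adjoin k (Set.range z)) R := by
  have : IsScalarTower k (𝒜 0) R := ⟨fun c a x => smul_mul_assoc c (a : R) x⟩
  have : Algebra.FiniteType (𝒜 0) R := .of_restrictScalars_finiteType k _ _
  obtain ⟨s, hs, hdeg⟩ := GradedAlgebra.exists_finset_adjoin_eq_top_and_homogeneous_ne_zero 𝒜
  choose! deg hdeg0 hmem using hdeg
  have hdvd {x : R} (hx : x ∈ s) : deg x ∣ ∏ y ∈ s, deg y := Finset.dvd_prod_of_mem deg hx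
  have hpos : 0 < ∏ y ∈ s, deg y := Finset.prod_pos fun x hx => Nat.pos_of_ne_zero (hdeg0 x hx)
  let z (x : s) : R := (x : R) ^ ((∏ y ∈ s, deg y) / deg x)
  refine ⟨∏ y ∈ s, deg y, s.card, z ∘ s.equivFin.symm, hpos, fun i => ?_, ⟨fun x => ?_⟩⟩
  · have hx := (s.equivFin.symm i).2
    simpa only [z, Function.comp_apply, smul_eq_mul, Nat.div_mul_cancel (hdvd hx)] using
      SetLike.pow_mem_graded ((∏ y ∈ s, deg y) / deg (s.equivFin.symm i)) (hmem _ hx)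
  · rw [EquivLike.range_comp]
    have hx : x ∈ Algebra.adjoin (𝒜 0) (s : Set R) := hs ▸ Algebra.mem_top
    induction hx using Algebra.adjoin_induction with
    | mem x hx =>
      refine IsIntegral.of_pow (Nat.div_pos (Nat.le_of_dvd hpos (hdvd hx))
        (Nat.pos_of_ne_zero (hdeg0 x hx))) ?_
      exact isIntegral_algebraMap (R := Algebra.adjoin k (Set.range z))
        (x := ⟨z ⟨x, hx⟩, Algebra.subset_adjoin ⟨_, rfl⟩⟩)
    | algebraMap c =>
      have hc : IsIntegral k c := Algebra.IsIntegral.isIntegral c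
      exact (hc.map (IsScalarTower.toAlgHom k (𝒜 0) R)).tower_top
    | add x y _ _ hx hy => exact hx.add hy
    | mul x y _ _ hx hy => exact hx.mul hy

variable [Field k] [Infinite k] [Algebra k R] (𝒜 : ℕ → Submodule k R)
  [GradedAlgebra 𝒜]

theorem exists_family_isIntegral_adjoin_of_not_algebraicIndependent {n d : ℕ} (hd : 0 < d)
    {z : Fin (n + 1) → R} (hz : ∀ i, z i ∈ 𝒜 d)
    [Algebra.IsIntegral (Algebra.adjoin k (Set.range z)) R] (hdep : ¬ AlgebraicIndependent k z) :
    ∃ z' : Fin n → R, (∀ i, z' i ∈ 𝒜 d) ∧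
      Algebra.IsIntegral (Algebra.adjoin k (Set.range z')) R := by
  obtain ⟨m, F, hF, hF0, hroot⟩ := exists_isHomogeneous_aeval_eq_zero 𝒜 hd hz hdep
  obtain ⟨a, ha⟩ : ∃ a, MvPolynomial.eval a (MvPolynomial.X 0 * F) ≠ 0 := by
    by_contra! h
    exact mul_ne_zero (MvPolynomial.X_ne_zero 0) hF0 (MvPolynomial.funext fun a => by simp [h a])
  -- With `y = z 0 / a 0` the element `w 0` vanishes, which drops one generator.
  obtain ⟨ha0, haF⟩ : a 0 ≠ 0 ∧ MvPolynomial.eval a F ≠ 0 := by simpa using ha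
  set y : R := (a 0)⁻¹ • z 0
  set w : Fin (n + 1) → R := fun i => z i - a i • y
  have hw0 : w 0 = 0 := by simp [w, y, smul_smul, mul_inv_cancel₀ ha0]
  refine ⟨w ∘ Fin.succ, fun i => sub_mem (hz _)
    (Submodule.smul_mem _ _ (Submodule.smul_mem _ _ (hz 0))), ?_⟩
  set B := Algebra.adjoin k (Set.range (w ∘ Fin.succ))
  have hwB : ∀ i, w i ∈ B :=
    Fin.cases (hw0 ▸ zero_mem B) fun i => Algebra.subset_adjoin ⟨i, rfl⟩
  have hzw (i : Fin (n + 1)) : w i + a i • y = z i := sub_add_cancel _ _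
  have hy : IsIntegral B y := by
    refine isIntegral_of_aeval_add_smul_eq_zero hF (w := fun i => ⟨w i, hwB i⟩) haF.isUnit ?_
    exact (congrArg (fun f => MvPolynomial.aeval f F) (funext hzw)).trans hroot
  refine isIntegral_of_isIntegral_adjoin B (Z := Set.range z) (Set.forall_mem_range.mpr fun i => ?_)
  rw [← hzw i]
  exact (isIntegral_algebraMap (x := (⟨w i, hwB i⟩ : B))).add (hy.smul (a i))

theorem exists_algebraicIndependent_isIntegral_adjoin [Nontrivial R] [Algebra.FiniteType k R]
    [Module.Finite k (𝒜 0)] :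
    ∃ (d n : ℕ) (z : Fin n → R), 0 < d ∧ (∀ i, z i ∈ 𝒜 d) ∧ AlgebraicIndependent k z ∧
      Algebra.IsIntegral (Algebra.adjoin k (Set.range z)) R := by
  obtain ⟨d, n, z, hd, hz, hint⟩ := exists_family_isIntegral_adjoin_of_finite_zero 𝒜
  induction n with
  | zero => exact ⟨d, 0, z, hd, hz, algebraicIndependent_empty_type, hint⟩
  | succ n ih =>
    by_cases hind : AlgebraicIndependent k z
    · exact ⟨d, n + 1, z, hd, hz, hind, hint⟩
    · obtain ⟨z', hz', hint'⟩ :=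
        exists_family_isIntegral_adjoin_of_not_algebraicIndependent 𝒜 hd hz hind
      exact ih z' hz' hint'

theorem exists_algebraicIndependent_finite_of_ringKrullDim_eq [Nontrivial R]
    [Algebra.FiniteType k R] [Module.Finite k (𝒜 0)] {r : ℕ} (hr : ringKrullDim R = r) :
    ∃ (d : ℕ) (z : Fin r → R), 0 < d ∧ (∀ i, z i ∈ 𝒜 d) ∧ AlgebraicIndependent k z ∧
      (MvPolynomial.aeval (R := k) z).Finite := by
  obtain ⟨d, n, z, hd, hz, hind, hint⟩ := exists_algebraicIndependent_isIntegral_adjoin 𝒜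
  have hint' : (MvPolynomial.aeval (R := k) z).toRingHom.IsIntegral := by
    have h1 := RingHom.IsIntegral.trans hind.aevalEquiv.toRingHom (algebraMap _ R)
      (RingHom.isIntegral_of_surjective _ hind.aevalEquiv.surjective) hint.1
    convert h1 using 1
    ext x <;> simp
  have hfin : (MvPolynomial.aeval (R := k) z).Finite := by
    refine hint'.to_finite (RingHom.FiniteType.of_comp_finiteType
      (f := algebraMap k (MvPolynomial (Fin n) k)) ?_)
    have hcomp := (MvPolynomial.aeval (R := k) z).comp_algebraMap
    exact hcomp ▸ RingHom.finiteType_algebraMap.mpr inferInstance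
  obtain rfl : n = r := by
    algebraize [(MvPolynomial.aeval (R := k) z).toRingHom]
    have := ringKrullDim_eq_of_isIntegral_of_injective (A := MvPolynomial (Fin n) k) (B := R) hind
    rw [hr, MvPolynomial.ringKrullDim_of_isNoetherianRing, ringKrullDim_eq_zero_of_field] at this
    simpa using this.symm
  exact ⟨d, z, hd, hz, hind, hfin⟩

end NoetherNormalization

section Saturated

variable {k R : Type*} [Field k] [CommRing R] [Algebra k R] (𝒜 : ℕ → Submodule k R)
  [GradedAlgebra 𝒜]

theorem not_finite_of_eventually_finrank_ne_zero
    (hsat : ∀ᶠ i in atTop, Module.finrank k (𝒜 i) ≠ 0) : ¬ Module.Finite k R := by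
  intro hfin
  obtain ⟨N, hN⟩ := eventually_atTop.mp hsat
  refine (Set.Ici_infinite N).mono (fun i hi hbot => ?_)
    (WellFoundedGT.finite_ne_bot_of_iSupIndep
      (DirectSum.Decomposition.isInternal 𝒜).submodule_iSupIndep)
  exact hN i hi (by rw [hbot, finrank_bot])

theorem ringKrullDim_ne_zero_of_eventually_finrank_ne_zero [Algebra.FiniteType k R]
    (hsat : ∀ᶠ i in atTop, Module.finrank k (𝒜 i) ≠ 0) : ringKrullDim R ≠ 0 := fun hdim =>
  not_finite_of_eventually_finrank_ne_zero 𝒜 hsat <|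
    (Module.finite_iff_krullDimLE_zero k R).mpr (Ring.krullDimLE_iff.mpr hdim.le)

variable [IsDomain R]

theorem exists_injective_linearMap_add (i : ℕ) {n : ℕ} (hn : 𝒜 n ≠ ⊥) :
    ∃ f : 𝒜 i →ₗ[k] 𝒜 (i + n), Function.Injective f := by
  obtain ⟨x, hx, hx0⟩ := (𝒜 n).ne_bot_iff.mp hn
  exact ⟨(LinearMap.mulRight k x).restrict fun y hy => SetLike.mul_mem_graded hy hx,
    fun y y' h => Subtype.ext (mul_right_cancel₀ hx0 (congrArg Subtype.val h))⟩

variable {𝒜}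

theorem finite_of_eventually_finrank_ne_zero
    (hsat : ∀ᶠ i in atTop, Module.finrank k (𝒜 i) ≠ 0) (i : ℕ) : Module.Finite k (𝒜 i) := by
  obtain ⟨n, hni, hn⟩ := (((tendsto_add_atTop_nat i).eventually hsat).and hsat).exists
  obtain ⟨f, hf⟩ := exists_injective_linearMap_add 𝒜 i (n := n) fun h => hn (by rw [h, finrank_bot])
  rw [add_comm] at hni
  have := Module.finite_of_finrank_pos (Nat.pos_of_ne_zero hni)
  exact Module.Finite.of_injective f hf

theorem exists_forall_finrank_le_finrank_of_add_le
    (hsat : ∀ᶠ i in atTop, Module.finrank k (𝒜 i) ≠ 0) :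
    ∃ N, ∀ i j, i + N ≤ j → Module.finrank k (𝒜 i) ≤ Module.finrank k (𝒜 j) := by
  obtain ⟨N, hN⟩ := eventually_atTop.mp hsat
  refine ⟨N, fun i j hij => ?_⟩
  obtain ⟨m, rfl⟩ := Nat.exists_eq_add_of_le hij
  rw [add_assoc]
  obtain ⟨f, hf⟩ := exists_injective_linearMap_add 𝒜 i (n := N + m)
    fun h => hN (N + m) (Nat.le_add_right _ _) (by rw [h, finrank_bot])
  have := finite_of_eventually_finrank_ne_zero hsat (i + (N + m))
  exact LinearMap.finrank_le_finrank_of_injective hf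

end Saturated

theorem finrank_homogeneousSubmodule_eq_multichoose {σ k : Type*} [Fintype σ] [CommRing k]
    [Nontrivial k] (n : ℕ) : Module.finrank k (MvPolynomial.homogeneousSubmodule σ k n) =
      (Fintype.card σ).multichoose n := by
  classical
  have hs : {e : σ →₀ ℕ | e.degree = n} = (Finset.univ.finsuppAntidiag n : Finset (σ →₀ ℕ)) := by
    ext e
    simp [Finset.mem_finsuppAntidiag, Finsupp.degree_eq_sum]
  rw [MvPolynomial.homogeneousSubmodule_eq_finsupp_supported, hs,
    (AddMonoidAlgebra.supportedEquivFinsupp _).finrank_eq, Module.finrank_finsupp_self,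
    Fintype.card_eq_nat_card, Nat.card_coe_set_eq, Set.ncard_coe_finset,
    Finset.card_finsuppAntidiag_nat_eq_multichoose, Finset.card_univ]

theorem exists_ne_zero_forall_mem_span_smul_mem {P M ι : Type*} [CommRing P] [IsDomain P]
    [AddCommGroup M] [Module P M] [Finite ι] {g : ι → M} {N : Submodule P M}
    (hg : ∀ i, ∃ b : P, b ≠ 0 ∧ b • g i ∈ N) :
    ∃ b : P, b ≠ 0 ∧ ∀ x ∈ Submodule.span P (Set.range g), b • x ∈ N := by
  cases nonempty_fintype ι
  choose b hb hbg using hg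
  refine ⟨∏ i, b i, Finset.prod_ne_zero_iff.mpr fun i _ => hb i, fun x hx => ?_⟩
  have hle : Submodule.span P (Set.range g) ≤ N.comap (LinearMap.lsmul P M (∏ i, b i)) := by
    rw [Submodule.span_le, Set.range_subset_iff]
    intro i
    obtain ⟨c, hc⟩ := Finset.dvd_prod_of_mem b (Finset.mem_univ i)
    rw [SetLike.mem_coe, Submodule.mem_comap, LinearMap.lsmul_apply, hc, mul_comm, mul_smul]
    exact N.smul_mem c (hbg i)
  exact hle hx

section RankSandwich

variable {k R σ ι : Type*} [Field k] [CommRing R] [Algebra k R] [Algebra (MvPolynomial σ k) R]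
  [IsScalarTower k (MvPolynomial σ k) R] (𝒜 : ℕ → Submodule k R) [GradedAlgebra 𝒜] {d e : ℕ}

theorem smul_mem_of_isHomogeneous
    (hX : ∀ i, algebraMap (MvPolynomial σ k) R (MvPolynomial.X i) ∈ 𝒜 d)
    {F : MvPolynomial σ k} {m : ℕ} (hF : F.IsHomogeneous m) {x : R} (hx : x ∈ 𝒜 e) :
    F • x ∈ 𝒜 (m * d + e) := by
  rw [Algebra.smul_def]
  exact SetLike.mul_mem_graded (map_mem_of_isHomogeneous 𝒜
    (φ := IsScalarTower.toAlgHom k (MvPolynomial σ k) R) hX hF) hx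

theorem decompose_smul_of_mem (hd : 0 < d)
    (hX : ∀ i, algebraMap (MvPolynomial σ k) R (MvPolynomial.X i) ∈ 𝒜 d)
    (F : MvPolynomial σ k) (m : ℕ) {x : R} (hx : x ∈ 𝒜 e) :
    (DirectSum.decompose 𝒜 (F • x) (m * d + e) : R) =
      MvPolynomial.homogeneousComponent m F • x := by
  rw [Algebra.smul_def, Algebra.smul_def, DirectSum.coe_decompose_mul_add_of_right_mem 𝒜 hx]
  exact congrArg (· * x) (decompose_map_apply 𝒜 hd
    (φ := IsScalarTower.toAlgHom k (MvPolynomial σ k) R) hX F m)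

theorem exists_linearIndepOn_smul_mem_span [Nonempty σ] [Finite σ]
    [Module.Finite (MvPolynomial σ k) R]
    (hX : ∀ i, algebraMap (MvPolynomial σ k) R (MvPolynomial.X i) ∈ 𝒜 d) :
    ∃ (M : ℕ) (s : Set R), s.Finite ∧ s ⊆ 𝒜 (M * d) ∧ LinearIndepOn (MvPolynomial σ k) id s ∧
      ∃ b : MvPolynomial σ k, b ≠ 0 ∧
        ∀ m, ∀ x ∈ 𝒜 (m * d), b • x ∈ Submodule.span (MvPolynomial σ k) s := by
  classical
  obtain ⟨G, hG, hGspan⟩ := (Submodule.fg_span_iff_fg_span_finset_subset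
    (R := MvPolynomial σ k) (⋃ m, (𝒜 (m * d) : Set R))).mp (IsNoetherian.noetherian _)
  choose deg hdeg using fun g : G => Set.mem_iUnion.mp (hG g.2)
  set M := Finset.univ.sup deg
  obtain ⟨i₀⟩ := ‹Nonempty σ›
  -- Powers of a variable move all generators into the common degree `M * d`.
  let c (g : G) : MvPolynomial σ k := MvPolynomial.X i₀ ^ (M - deg g)
  have hc (g : G) : c g ≠ 0 := pow_ne_zero _ (MvPolynomial.X_ne_zero i₀)
  have hcg (g : G) : c g • (g : R) ∈ 𝒜 (M * d) := by
    have hle : deg g ≤ M := Finset.le_sup (Finset.mem_univ g)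
    simpa only [← add_mul, Nat.sub_add_cancel hle] using
      smul_mem_of_isHomogeneous 𝒜 hX (MvPolynomial.isHomogeneous_X_pow i₀ (M - deg g)) (hdeg g)
  obtain ⟨s, hs, hmax⟩ := exists_maximal_linearIndepOn (MvPolynomial σ k) fun g => c g • (g : R)
  obtain ⟨b, hb, hbs⟩ := exists_ne_zero_forall_mem_span_smul_mem (P := MvPolynomial σ k)
    (g := ((↑) : G → R)) (N := .span _ ((fun g => c g • (g : R)) '' s)) fun g => by
      by_cases hg : g ∈ s
      · exact ⟨c g, hc g, Submodule.subset_span ⟨g, hg, rfl⟩⟩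
      · obtain ⟨a, ha, hag⟩ := hmax g hg
        exact ⟨a * c g, mul_ne_zero ha (hc g), by rwa [mul_smul]⟩
  refine ⟨M, _, s.toFinite.image _, Set.image_subset_iff.mpr fun g _ => hcg g, hs.id_image,
    b, hb, fun m x hx => hbs x ?_⟩
  rw [Subtype.range_coe, ← hGspan]
  exact Submodule.subset_span (Set.mem_iUnion.mpr ⟨m, hx⟩)

theorem card_mul_finrank_homogeneousSubmodule_le [Finite σ] [Fintype ι]
    (hX : ∀ i, algebraMap (MvPolynomial σ k) R (MvPolynomial.X i) ∈ 𝒜 d)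
    {v : ι → R} (hv : ∀ i, v i ∈ 𝒜 e) (hli : LinearIndependent (MvPolynomial σ k) v) (m : ℕ)
    [Module.Finite k (𝒜 (m * d + e))] :
    Fintype.card ι * Module.finrank k (MvPolynomial.homogeneousSubmodule σ k m) ≤
      Module.finrank k (𝒜 (m * d + e)) := by
  have := Module.Finite.iff_fg.mpr (MvPolynomial.homogeneousSubmodule_fg σ k m)
  let f : (ι → MvPolynomial.homogeneousSubmodule σ k m) →ₗ[k] R :=
    (Fintype.linearCombination (MvPolynomial σ k) v).restrictScalars k ∘ₗ
      (MvPolynomial.homogeneousSubmodule σ k m).subtype.compLeft ι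
  have hf : Function.Injective f := hli.fintypeLinearCombination_injective.comp
    (Subtype.val_injective.comp_left)
  have hrange : LinearMap.range f ≤ 𝒜 (m * d + e) := by
    rintro _ ⟨p, rfl⟩
    exact Submodule.sum_mem _ fun i _ => smul_mem_of_isHomogeneous 𝒜 hX (p i).2 (hv i)
  calc Fintype.card ι * Module.finrank k (MvPolynomial.homogeneousSubmodule σ k m)
      = Module.finrank k (ι → MvPolynomial.homogeneousSubmodule σ k m) := by
        simp [Module.finrank_pi_fintype]
    _ = Module.finrank k (LinearMap.range f) := (LinearMap.finrank_range_of_inj hf).symm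
    _ ≤ Module.finrank k (𝒜 (m * d + e)) := Submodule.finrank_mono hrange

theorem finrank_le_card_mul_finrank_homogeneousSubmodule [Finite σ] [Fintype ι] [IsDomain R]
    [FaithfulSMul (MvPolynomial σ k) R] (hd : 0 < d)
    (hX : ∀ i, algebraMap (MvPolynomial σ k) R (MvPolynomial.X i) ∈ 𝒜 d)
    {v : ι → R} (hv : ∀ i, v i ∈ 𝒜 e) {b : MvPolynomial σ k} {a m : ℕ}
    (ha : MvPolynomial.homogeneousComponent a b ≠ 0)
    (hb : ∀ x ∈ 𝒜 (m * d + e), b • x ∈ Submodule.span (MvPolynomial σ k) (Set.range v)) :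
    Module.finrank k (𝒜 (m * d + e)) ≤
      Fintype.card ι * Module.finrank k (MvPolynomial.homogeneousSubmodule σ k (m + a)) := by
  have := Module.Finite.iff_fg.mpr (MvPolynomial.homogeneousSubmodule_fg σ k (m + a))
  let f : (ι → MvPolynomial.homogeneousSubmodule σ k (m + a)) →ₗ[k] R :=
    (Fintype.linearCombination (MvPolynomial σ k) v).restrictScalars k ∘ₗ
      (MvPolynomial.homogeneousSubmodule σ k (m + a)).subtype.compLeft ι
  set β := MvPolynomial.homogeneousComponent a b
  have hβ : Function.Injective ((LinearMap.lsmul (MvPolynomial σ k) R β).restrictScalars k) :=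
    smul_right_injective R ha
  have hrange : (𝒜 (m * d + e)).map ((LinearMap.lsmul (MvPolynomial σ k) R β).restrictScalars k) ≤
      LinearMap.range f := by
    rintro _ ⟨x, hx, rfl⟩
    obtain ⟨p, hp⟩ := (Submodule.mem_span_range_iff_exists_fun _).mp (hb x hx)
    refine ⟨fun i => ⟨_, MvPolynomial.homogeneousComponent_isHomogeneous (m + a) (p i)⟩, ?_⟩
    calc ∑ i, MvPolynomial.homogeneousComponent (m + a) (p i) • v i
        = (DirectSum.decompose 𝒜 (∑ i, p i • v i) ((m + a) * d + e) : R) := by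
          rw [DirectSum.decompose_sum, DFinsupp.finsetSum_apply, AddSubmonoidClass.coe_finsetSum]
          exact Finset.sum_congr rfl fun i _ => (decompose_smul_of_mem 𝒜 hd hX _ _ (hv i)).symm
      _ = (DirectSum.decompose 𝒜 (b • x) (a * d + (m * d + e)) : R) := by
          rw [hp, show (m + a) * d + e = a * d + (m * d + e) by ring]
      _ = β • x := decompose_smul_of_mem 𝒜 hd hX b a hx
  calc Module.finrank k (𝒜 (m * d + e))
      = Module.finrank k ((𝒜 (m * d + e)).map _) :=
        (Submodule.equivMapOfInjective _ hβ _).finrank_eq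
    _ ≤ Module.finrank k (LinearMap.range f) := Submodule.finrank_mono hrange
    _ ≤ Module.finrank k (ι → MvPolynomial.homogeneousSubmodule σ k (m + a)) :=
        LinearMap.finrank_range_le f
    _ = _ := by simp [Module.finrank_pi_fintype]

end RankSandwich

theorem exists_finrank_sandwich {k R σ : Type*} [Field k] [CommRing R] [IsDomain R] [Algebra k R]
    (𝒜 : ℕ → Submodule k R) [GradedAlgebra 𝒜] [∀ i, Module.Finite k (𝒜 i)] [Fintype σ] [Nonempty σ]
    {d : ℕ} (hd : 0 < d) {z : σ → R} (hz : ∀ i, z i ∈ 𝒜 d) (hind : AlgebraicIndependent k z)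
    (hfin : (MvPolynomial.aeval (R := k) z).Finite) :
    ∃ ρ M a : ℕ, ∀ m, ρ * (Fintype.card σ).multichoose m ≤ Module.finrank k (𝒜 ((m + M) * d)) ∧
      Module.finrank k (𝒜 ((m + M) * d)) ≤ ρ * (Fintype.card σ).multichoose (m + a) := by
  algebraize [(MvPolynomial.aeval (R := k) z).toRingHom]
  have : IsScalarTower k (MvPolynomial σ k) R := .of_algHom (MvPolynomial.aeval z)
  have : Module.Finite (MvPolynomial σ k) R := hfin
  have : FaithfulSMul (MvPolynomial σ k) R := (faithfulSMul_iff_algebraMap_injective _ _).mpr hind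
  have hX (i : σ) : algebraMap (MvPolynomial σ k) R (MvPolynomial.X i) ∈ 𝒜 d := by
    simpa [RingHom.algebraMap_toAlgebra] using hz i
  obtain ⟨M, s, hs, hsM, hli, b, hb, hbs⟩ := exists_linearIndepOn_smul_mem_span 𝒜 hX
  obtain ⟨a, ha⟩ := exists_homogeneousComponent_ne_zero hb
  have := hs.fintype
  refine ⟨Fintype.card s, M, a, fun m => ?_⟩
  rw [← finrank_homogeneousSubmodule_eq_multichoose (k := k) m,
    ← finrank_homogeneousSubmodule_eq_multichoose (k := k) (m + a), add_mul]
  refine ⟨card_mul_finrank_homogeneousSubmodule_le 𝒜 hX (fun i => hsM i.2) hli m,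
    finrank_le_card_mul_finrank_homogeneousSubmodule 𝒜 hd hX (v := fun i : s => (i : R))
      (fun i => hsM i.2) ha fun x hx => ?_⟩
  rw [Subtype.range_coe]
  exact hbs (m + M) x (by rwa [add_mul])

theorem isBigO_pow_sub_pow {α : Type*} {l : Filter α} {u v : α → ℝ}
    (hsub : (fun x => u x - v x) =O[l] fun _ => (1 : ℝ)) (huv : u =O[l] v) (q : ℕ) :
    (fun x => u x ^ q - v x ^ q) =O[l] fun x => (q : ℝ) * v x ^ (q - 1) := by
  cases q with
  | zero => exact .of_bound 0 (by simp)
  | succ p =>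
    have hterm (i : ℕ) (hi : i ∈ Finset.range (p + 1)) :
        (fun x => u x ^ i * v x ^ (p - i)) =O[l] fun x => v x ^ p := by
      refine ((huv.pow i).mul (isBigO_refl _ l)).congr_right fun x => ?_
      rw [← pow_add, Nat.add_sub_cancel' (Finset.mem_range_succ_iff.mp hi)]
    have hprod := ((IsBigO.sum hterm).mul hsub).congr_left
      (f₂ := fun x => u x ^ (p + 1) - v x ^ (p + 1)) fun x => by
        simpa using geom_sum₂_mul (u x) (v x) (p + 1)
    simp only [mul_one] at hprod
    exact hprod.trans (isBigO_self_const_mul (Nat.cast_ne_zero.mpr p.succ_ne_zero) _ _)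

/-- `f n = κ n ^ q + O(n ^ (q - 1))`. The factor `q` in the error term makes it vanish for `q = 0`,
where the truncated exponent `q - 1` would be too weak: a function with leading term `κ n ^ 0` is
eventually equal to `κ`. -/
def HasLeadingTerm (f : ℕ → ℝ) (κ : ℝ) (q : ℕ) : Prop :=
  (fun n : ℕ => f n - κ * (n : ℝ) ^ q) =O[atTop] fun n : ℕ => (q : ℝ) * (n : ℝ) ^ (q - 1)

theorem hasLeadingTerm_pow (q : ℕ) : HasLeadingTerm (fun n => (n : ℝ) ^ q) 1 q :=
  .of_bound 0 (by simp)

namespace HasLeadingTerm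

variable {f g h : ℕ → ℝ} {κ : ℝ} {q : ℕ}

theorem const_mul (hf : HasLeadingTerm f κ q) (c : ℝ) :
    HasLeadingTerm (fun n => c * f n) (c * κ) q :=
  (hf.const_mul_left c).congr_left fun n => by ring

theorem of_le_of_le (hf : HasLeadingTerm f κ q) (hh : HasLeadingTerm h κ q)
    (hfg : ∀ᶠ n in atTop, f n ≤ g n) (hgh : ∀ᶠ n in atTop, g n ≤ h n) : HasLeadingTerm g κ q := by
  refine IsBigO.trans (IsBigO.of_bound 1 ?_) (hf.norm_left.add hh.norm_left)
  filter_upwards [hfg, hgh] with n hfgn hghn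
  rw [one_mul, Real.norm_of_nonneg (add_nonneg (norm_nonneg _) (norm_nonneg _))]
  exact (abs_le_max_abs_abs (sub_le_sub_right hfgn _) (sub_le_sub_right hghn _)).trans
    (max_le_add_of_nonneg (abs_nonneg _) (abs_nonneg _))

theorem comp (hf : HasLeadingTerm f κ q) {φ : ℕ → ℕ} {c : ℝ} (hc : 0 < c)
    (hφ : (fun n => (φ n : ℝ) - c * n) =O[atTop] fun _ => (1 : ℝ)) :
    HasLeadingTerm (fun n => f (φ n)) (κ * c ^ q) q := by
  have hlin : Tendsto (fun n : ℕ => c * (n : ℝ)) atTop atTop :=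
    tendsto_natCast_atTop_atTop.const_mul_atTop hc
  have hequiv : (fun n => (φ n : ℝ)) ~[atTop] fun n : ℕ => c * (n : ℝ) :=
    hφ.trans_isLittleO ((isLittleO_const_left.mpr (Or.inr
      (tendsto_norm_atTop_atTop.comp hlin))))
  have hφtop : Tendsto φ atTop atTop :=
    tendsto_natCast_atTop_iff.mp (hequiv.symm.tendsto_atTop hlin)
  have herror : (fun n : ℕ => (q : ℝ) * (c * n) ^ (q - 1)) =O[atTop]
      fun n : ℕ => (q : ℝ) * (n : ℝ) ^ (q - 1) :=
    (isBigO_const_mul_self (c ^ (q - 1)) _ _).congr_left fun n => by ring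
  have hfφ : (fun n => f (φ n) - κ * (φ n : ℝ) ^ q) =O[atTop]
      fun n : ℕ => (q : ℝ) * (c * n) ^ (q - 1) :=
    (hf.comp_tendsto hφtop).trans ((isBigO_refl _ _).mul (hequiv.isBigO.pow _))
  have hφpow := (isBigO_pow_sub_pow hφ hequiv.isBigO q).const_mul_left κ
  exact ((hfφ.add hφpow).trans herror).congr_left fun n => by ring

theorem comp_add_const (hf : HasLeadingTerm f κ q) (a : ℕ) :
    HasLeadingTerm (fun n => f (n + a)) κ q := by
  simpa using hf.comp one_pos (φ := fun n => n + a)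
    (by simpa using isBigO_const_const (a : ℝ) (one_ne_zero (α := ℝ)) _)

theorem isLittleO (hf : HasLeadingTerm f κ q) :
    (fun n : ℕ => f n - κ * (n : ℝ) ^ q) =o[atTop] fun n : ℕ => (n : ℝ) ^ q := by
  refine hf.trans_isLittleO ?_
  cases q with
  | zero => simp
  | succ p =>
    exact ((isLittleO_pow_pow_atTop_of_lt p.lt_succ_self).comp_tendsto
      tendsto_natCast_atTop_atTop).const_mul_left _

end HasLeadingTerm

theorem pow_le_factorial_mul_choose (n q : ℕ) : n ^ q ≤ q.factorial * (n + q).choose q := by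
  rw [← Nat.ascFactorial_eq_factorial_mul_choose]
  exact (Nat.pow_le_pow_left n.le_succ q).trans (Nat.pow_succ_le_ascFactorial (n + 1) q)

theorem factorial_mul_choose_le_pow (n q : ℕ) : q.factorial * (n + q).choose q ≤ (n + q) ^ q := by
  rw [← Nat.descFactorial_eq_factorial_mul_choose]
  exact Nat.descFactorial_le_pow _ _

theorem hasLeadingTerm_choose (q : ℕ) :
    HasLeadingTerm (fun n => ((n + q).choose q : ℝ)) (q.factorial : ℝ)⁻¹ q := by
  have hpow := hasLeadingTerm_pow q
  have hmul : HasLeadingTerm (fun n => (q.factorial : ℝ) * (n + q).choose q) 1 q :=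
    hpow.of_le_of_le (hpow.comp_add_const q)
      (.of_forall fun n => by exact_mod_cast pow_le_factorial_mul_choose n q)
      (.of_forall fun n => by exact_mod_cast factorial_mul_choose_le_pow n q)
  simpa [Nat.factorial_ne_zero] using hmul.const_mul (q.factorial : ℝ)⁻¹

theorem isBigO_natCast_sub_inv_mul_of_le_add {φ : ℕ → ℕ} {d C : ℕ} (hd : 0 < d)
    (hle : ∀ n, d * φ n ≤ n + C) (hge : ∀ n, n ≤ d * φ n + C) :
    (fun n => (φ n : ℝ) - (d : ℝ)⁻¹ * n) =O[atTop] fun _ => (1 : ℝ) := by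
  refine IsBigO.of_bound ((d : ℝ)⁻¹ * C) (.of_forall fun n => ?_)
  have hle' : (d : ℝ) * φ n ≤ n + C := by exact_mod_cast hle n
  have hge' : (n : ℝ) ≤ d * φ n + C := by exact_mod_cast hge n
  rw [norm_one, mul_one, show (φ n : ℝ) - (d : ℝ)⁻¹ * n = (d : ℝ)⁻¹ * (d * φ n - n) by field_simp,
    norm_mul, Real.norm_of_nonneg (by positivity), Real.norm_eq_abs]
  gcongr
  exact abs_sub_le_iff.mpr ⟨by linarith, by linarith⟩

theorem hasLeadingTerm_of_arithmetic_progression {f : ℕ → ℝ} {κ : ℝ} {q N M d : ℕ} (hd : 0 < d)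
    (hmono : ∀ i j, i + N ≤ j → f i ≤ f j)
    (hf : HasLeadingTerm (fun m => f ((m + M) * d)) κ q) :
    HasLeadingTerm f (κ * (d : ℝ)⁻¹ ^ q) q := by
  have hd' : (0 : ℝ) < (d : ℝ)⁻¹ := by positivity
  have hNd : N ≤ d * N := Nat.le_mul_of_pos_left N hd
  have hmul_div (n : ℕ) := Nat.mul_div_le n d
  have hlt_mul_div (n : ℕ) := Nat.lt_mul_div_succ n hd
  refine (hf.comp (φ := fun n => n / d - (M + N)) hd' ?_).of_le_of_le
    (hf.comp (φ := fun n => n / d + (N + 1)) hd' ?_) ?_ ?_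
  · refine isBigO_natCast_sub_inv_mul_of_le_add (C := d * (M + N + 1)) hd (fun n => ?_)
      (fun n => ?_)
    · exact (Nat.mul_le_mul_left d (Nat.sub_le _ _)).trans
        ((hmul_div n).trans (Nat.le_add_right _ _))
    · rw [← mul_add]
      exact (hlt_mul_div n).le.trans (Nat.mul_le_mul_left d (by omega))
  · refine isBigO_natCast_sub_inv_mul_of_le_add (C := d * (N + 1)) hd (fun n => ?_) (fun n => ?_)
    · rw [mul_add]
      exact Nat.add_le_add_right (hmul_div n) _
    · rw [← mul_add]
      exact (hlt_mul_div n).le.trans (Nat.mul_le_mul_left d (by omega))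
  · filter_upwards [eventually_ge_atTop (d * (M + N))] with n hn
    have hle : (n / d - (M + N) + M) * d + N ≤ n := by
      obtain ⟨m, hm⟩ := Nat.exists_eq_add_of_le ((Nat.le_div_iff_mul_le hd).mpr
        ((mul_comm _ d).trans_le hn))
      rw [hm, Nat.add_sub_cancel_left]
      have := hmul_div n
      rw [hm] at this
      linarith
    exact hmono _ _ hle
  · filter_upwards with n
    have hle : n + N ≤ (n / d + (N + 1) + M) * d := by
      have := hlt_mul_div n
      nlinarith
    exact hmono _ _ hle

section Abel

variable {c e f : ℕ → ℝ}

theorem norm_tsum_mul_pow_le {t s δ : ℝ} {N : ℕ} (ht0 : 0 ≤ t) (ht1 : t ≤ 1) (hδ : 0 ≤ δ)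
    (hc0 : ∀ n, 0 ≤ c n) (he : ∀ n, N ≤ n → ‖e n‖ ≤ δ * c n)
    (hs : HasSum (fun n => c n * t ^ n) s) :
    ‖∑' n, e n * t ^ n‖ ≤ ∑ n ∈ Finset.range N, ‖e n‖ + δ * s := by
  have hhead : HasSum (fun n => if n ∈ Finset.range N then ‖e n‖ else 0)
      (∑ n ∈ Finset.range N, ‖e n‖) := by
    rw [← Finset.sum_congr rfl fun n hn => if_pos hn]
    exact hasSum_sum_of_ne_finset_zero fun n hn => if_neg hn
  refine tsum_of_norm_bounded (hhead.add (hs.mul_left δ)) fun n => ?_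
  have htn : 0 ≤ t ^ n := pow_nonneg ht0 n
  have hcn := hc0 n
  rw [norm_mul, Real.norm_of_nonneg htn]
  split_ifs with hn
  · exact le_add_of_le_of_nonneg
      (mul_le_of_le_one_right (norm_nonneg _) (pow_le_one₀ ht0 ht1)) (by positivity)
  · rw [zero_add, ← mul_assoc]
    exact mul_le_mul_of_nonneg_right (he n (by simpa using hn)) htn

theorem isLittleO_tsum_mul_pow (hc0 : ∀ n, 0 ≤ c n)
    (hc : ∀ t : ℝ, 0 < t → t < 1 → Summable fun n => c n * t ^ n)
    (htop : Tendsto (fun t : ℝ => ∑' n, c n * t ^ n) (nhdsWithin 1 (Set.Iio 1)) atTop)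
    (he : e =o[atTop] c) :
    (fun t : ℝ => ∑' n, e n * t ^ n) =o[nhdsWithin 1 (Set.Iio 1)]
      fun t : ℝ => ∑' n, c n * t ^ n := by
  refine isLittleO_iff.mpr fun δ hδ => ?_
  obtain ⟨N, hN⟩ := eventually_atTop.mp (he.bound (half_pos hδ))
  have he' (n : ℕ) (hn : N ≤ n) : ‖e n‖ ≤ δ / 2 * c n := by
    simpa only [Real.norm_of_nonneg (hc0 n)] using hN n hn
  filter_upwards [htop.eventually_ge_atTop ((∑ n ∈ Finset.range N, ‖e n‖) / (δ / 2)),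
    Ioo_mem_nhdsLT zero_lt_one] with t hhead ht
  rw [div_le_iff₀' (half_pos hδ)] at hhead
  calc ‖∑' n, e n * t ^ n‖
      ≤ ∑ n ∈ Finset.range N, ‖e n‖ + δ / 2 * ∑' n, c n * t ^ n :=
        norm_tsum_mul_pow_le ht.1.le ht.2.le (half_pos hδ).le hc0 he' (hc t ht.1 ht.2).hasSum
    _ ≤ δ * ∑' n, c n * t ^ n := by linarith
    _ ≤ δ * ‖∑' n, c n * t ^ n‖ := by gcongr; exact Real.le_norm_self _

theorem tendsto_tsum_mul_pow_div_tsum_mul_pow {L : ℝ} (hc0 : ∀ n, 0 ≤ c n)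
    (hc : ∀ t : ℝ, 0 < t → t < 1 → Summable fun n => c n * t ^ n)
    (htop : Tendsto (fun t : ℝ => ∑' n, c n * t ^ n) (nhdsWithin 1 (Set.Iio 1)) atTop)
    (hf : (fun n => f n - L * c n) =o[atTop] c) :
    Tendsto (fun t : ℝ => (∑' n, f n * t ^ n) / ∑' n, c n * t ^ n) (nhdsWithin 1 (Set.Iio 1))
      (nhds L) := by
  have hlim := (isLittleO_tsum_mul_pow hc0 hc htop hf).tendsto_div_nhds_zero.add_const L
  rw [zero_add] at hlim
  refine hlim.congr' ?_
  filter_upwards [htop.eventually_gt_atTop 0, Ioo_mem_nhdsLT zero_lt_one] with t hpos ht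
  have hct := hc t ht.1 ht.2
  have herr : Summable fun n => (f n - L * c n) * t ^ n :=
    summable_of_isBigO_nat hct (hf.isBigO.mul (isBigO_refl _ _))
  rw [div_add' _ _ _ hpos.ne', ← tsum_mul_left, ← herr.tsum_add (hct.mul_left L)]
  exact congrArg (· / _) (tsum_congr fun n => by ring)

end Abel

theorem HasLeadingTerm.tendsto_one_sub_pow_mul_tsum {f : ℕ → ℝ} {κ : ℝ} {q : ℕ}
    (hf : HasLeadingTerm f κ q) :
    Tendsto (fun t : ℝ => (1 - t) ^ (q + 1) * ∑' n, f n * t ^ n) (nhdsWithin 1 (Set.Iio 1))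
      (nhds (κ * q.factorial)) := by
  have hsum (t : ℝ) (h0 : 0 < t) (h1 : t < 1) :
      HasSum (fun n => ((n + q).choose q : ℝ) * t ^ n) (1 / (1 - t) ^ (q + 1)) :=
    hasSum_choose_mul_geometric_of_norm_lt_one q (by rwa [Real.norm_of_nonneg h0.le])
  have hgeom : ∀ᶠ t : ℝ in nhdsWithin 1 (Set.Iio 1),
      ∑' n, ((n + q).choose q : ℝ) * t ^ n = ((1 - t) ^ (q + 1))⁻¹ := by
    filter_upwards [Ioo_mem_nhdsLT zero_lt_one] with t ht
    rw [(hsum t ht.1 ht.2).tsum_eq, one_div]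
  have hzero : Tendsto (fun t : ℝ => (1 - t) ^ (q + 1)) (nhdsWithin 1 (Set.Iio 1))
      (nhdsWithin 0 (Set.Ioi 0)) := by
    refine tendsto_nhdsWithin_iff.mpr ⟨Tendsto.mono_left ?_ nhdsWithin_le_nhds, ?_⟩
    · exact Continuous.tendsto' (by fun_prop) _ _ (by simp)
    · filter_upwards [self_mem_nhdsWithin] with t ht
      exact pow_pos (sub_pos.mpr (Set.mem_Iio.mp ht)) _
  have hpow : (fun n : ℕ => (n : ℝ) ^ q) =O[atTop] fun n : ℕ => ((n + q).choose q : ℝ) :=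
    IsBigO.of_bound q.factorial (.of_forall fun n => by
      rw [Real.norm_of_nonneg (by positivity), Real.norm_of_nonneg (by positivity)]
      exact_mod_cast pow_le_factorial_mul_choose n q)
  have hlittle : (fun n => f n - κ * q.factorial * ((n + q).choose q : ℝ)) =o[atTop]
      fun n : ℕ => ((n + q).choose q : ℝ) := by
    have hchoose := ((hasLeadingTerm_choose q).const_mul (κ * q.factorial)).isLittleO
    refine ((hf.isLittleO.sub hchoose).trans_isBigO hpow).congr_left fun n => ?_
    field_simp
    ring
  refine (tendsto_tsum_mul_pow_div_tsum_mul_pow (fun n => by positivity)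
    (fun t h0 h1 => (hsum t h0 h1).summable)
    (hzero.inv_tendsto_nhdsGT_zero.congr' (hgeom.mono fun t h => h.symm)) hlittle).congr' ?_
  filter_upwards [hgeom] with t ht
  rw [ht, div_inv_eq_mul, mul_comm]

theorem exists_hasLeadingTerm_finrank {k R : Type*} [Field k] [Infinite k] [CommRing R] [IsDomain R]
    [Algebra k R] [Algebra.FiniteType k R] (𝒜 : ℕ → Submodule k R) [GradedAlgebra 𝒜] {q : ℕ}
    (hdim : ringKrullDim R = (q + 1 : ℕ))
    (hsat : ∀ᶠ i in atTop, Module.finrank k (𝒜 i) ≠ 0) :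
    ∃ κ : ℝ, 0 < κ ∧ HasLeadingTerm (fun i => (Module.finrank k (𝒜 i) : ℝ)) κ q := by
  have hfinite := finite_of_eventually_finrank_ne_zero hsat
  obtain ⟨N, hmono⟩ := exists_forall_finrank_le_finrank_of_add_le hsat
  obtain ⟨d, z, hd, hz, hind, hfin⟩ := exists_algebraicIndependent_finite_of_ringKrullDim_eq 𝒜 hdim
  obtain ⟨ρ, M, a, hρ⟩ := exists_finrank_sandwich 𝒜 hd hz hind hfin
  have hchoose (m : ℕ) : (Fintype.card (Fin (q + 1))).multichoose m = (m + q).choose q := by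
    rw [Fintype.card_fin, Nat.multichoose_eq, add_right_comm, Nat.add_sub_cancel, add_comm q,
      Nat.choose_symm_add]
  simp only [hchoose] at hρ
  have hρ0 : 0 < ρ := Nat.pos_of_ne_zero fun h0 => by
    have htop : Tendsto (fun m => (m + M) * d) atTop atTop :=
      (tendsto_add_atTop_nat M).atTop_mul_const' hd
    obtain ⟨m, hm⟩ := (htop.eventually hsat).exists
    exact hm (by simpa [h0] using (hρ m).2)
  have hbinom := (hasLeadingTerm_choose q).const_mul ρ
  have hprog : HasLeadingTerm (fun m => (Module.finrank k (𝒜 ((m + M) * d)) : ℝ))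
      (ρ * (q.factorial : ℝ)⁻¹) q :=
    hbinom.of_le_of_le (hbinom.comp_add_const a)
      (.of_forall fun m => by exact_mod_cast (hρ m).1)
      (.of_forall fun m => by exact_mod_cast (hρ m).2)
  exact ⟨_, by positivity, hasLeadingTerm_of_arithmetic_progression hd
    (fun i j hij => Nat.cast_le.mpr (hmono i j hij)) hprog⟩

theorem stmt_1_general {k R : Type*} [Field k] [Infinite k] [CommRing R] [IsDomain R] [Algebra k R]
    (𝒜 : ℕ → Submodule k R) [GradedAlgebra 𝒜] [Algebra.FiniteType k R] {r : ℕ}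
    (hr : ringKrullDim R = r) (hsat : ∀ᶠ i in atTop, Module.finrank k (𝒜 i) ≠ 0) :
    ∃ V : ℝ, 0 < V ∧
      Tendsto (fun t : ℝ => (1 - t) ^ r * ∑' i : ℕ, (Module.finrank k (𝒜 i) : ℝ) * t ^ i)
        (nhdsWithin 1 (Set.Iio 1)) (nhds V) ∧
      HasLeadingTerm (fun i => (Module.finrank k (𝒜 i) : ℝ)) (V / (r - 1).factorial) (r - 1) := by
  obtain ⟨q, rfl⟩ : ∃ q, r = q + 1 := Nat.exists_eq_succ_of_ne_zero <| by
    rintro rfl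
    exact ringKrullDim_ne_zero_of_eventually_finrank_ne_zero 𝒜 hsat hr
  obtain ⟨κ, hκ, hlead⟩ := exists_hasLeadingTerm_finrank 𝒜 hr hsat
  refine ⟨κ * q.factorial, by positivity, hlead.tendsto_one_sub_pow_mul_tsum, ?_⟩
  simpa [Nat.factorial_ne_zero] using hlead

/-- For a finitely generated saturated graded `k`-algebra `A` which is a domain of Krull
dimension `r`, with volume `V = lim_{t→1⁻} (1-t)^r H_A(t)`, one has
`dim_k A_i = V i^{r-1}/(r-1)! + O(i^{r-2})` as `i → ∞`. -/
theorem stmt_1 {k R : Type*} [Field k] [CharZero k] [CommRing R] [IsDomain R] [Algebra k R]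
    (𝒜 : ℕ → Submodule k R) [GradedAlgebra 𝒜]
    (hfg : Algebra.FiniteType k R) (r : ℕ) (hr : ringKrullDim R = r)
    (hsat : ∀ᶠ i in atTop, Module.finrank k (𝒜 i) ≠ 0)
    (V : ℝ)
    (hV : Tendsto
      (fun t : ℝ => (1 - t) ^ r * ∑' i : ℕ, (Module.finrank k (𝒜 i) : ℝ) * t ^ i)
      (nhdsWithin 1 (Set.Iio 1)) (nhds V)) :
    (fun i : ℕ => (Module.finrank k (𝒜 i) : ℝ) - V * (i : ℝ) ^ (r - 1) / (r - 1).factorial)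
      =O[atTop] fun i : ℕ => (i : ℝ) ^ (r - 2) := by
  have := CharZero.infinite k
  obtain ⟨V', -, hV', hlead⟩ := stmt_1_general 𝒜 hr hsat
  obtain rfl := tendsto_nhds_unique hV hV'
  refine (hlead.trans (isBigO_const_mul_self _ _ _)).congr_left fun i => ?_
  ring
end

section
/- For a weakly decreasing sequence (d_1,…,d_l) of nonnegative integers, the Schur polynomial in l+k variables equals the generating function of semistandard Young tableaux: s_{(d_1,…,d_l,0,…,0)}(x_1,…,x_{l+k}) = Σ_{f ∈ SST_{l+k}(d_i)} ∏_{(i,j) ∈ T(d_i)} x_{f(i,j)}, where T(d_i) = {(i,j) ∈ ℤ² : 1 ≤ j, 1 ≤ i ≤ d_j} and SST_n(d_i) is the set of fillings f : T(d_i) → {1,…,n} weakly increasing along rows and strictly increasing down columns. -/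
open scoped Classical

/-!
Both sides obey the same branching rule in the last variable `y = x_n`, summed over the shapes `μ`
that interlace `D` (`D_{j+1} ≤ μ_j ≤ D_j`), each with the factor `y ^ (|D| - |μ|)`.

For tableaux, erasing the cells that hold the largest letter leaves a tableau of shape `μ`, and
`D \ μ` is a horizontal strip. For the bialternant, subtracting from each column of the numerator
`y ^ (D_j - D_{j+1} + 1)` times the next one clears its last row up to the corner. The remaining
entries are geometric sums times `x_i - y`, and expanding them by multilinearity produces the
alternants of the `μ`. The products of the `x_i - y` also relate the denominators for `n` and
`n - 1` variables.
-/

namespace SchurTableau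

open Finset

section Determinant

variable {R : Type*} [CommRing R]

theorem det_eq_of_forall_col_eq_smul_add_succ {n : ℕ} {A B : Matrix (Fin (n + 1)) (Fin (n + 1)) R}
    (c : Fin n → R) (A_last : ∀ i, A i (Fin.last n) = B i (Fin.last n))
    (A_castSucc : ∀ i (j : Fin n), A i j.castSucc = B i j.castSucc + c j * A i j.succ) :
    A.det = B.det := by
  rw [← Matrix.det_submatrix_equiv_self Fin.revPerm A,
    ← Matrix.det_submatrix_equiv_self Fin.revPerm B]
  refine Matrix.det_eq_of_forall_col_eq_smul_add_pred (fun j => c j.rev) (fun i => ?_)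
    (fun i j => ?_)
  · simpa using A_last i.rev
  · simpa [Fin.rev_succ, Fin.rev_castSucc] using A_castSucc i.rev j.rev

theorem det_eq_mul_det_castSucc_of_last_row_eq_zero {n : ℕ}
    {A : Matrix (Fin (n + 1)) (Fin (n + 1)) R} (h : ∀ j : Fin n, A (Fin.last n) j.castSucc = 0) :
    A.det = A (Fin.last n) (Fin.last n) * (A.submatrix Fin.castSucc Fin.castSucc).det := by
  simp [Matrix.det_succ_row A (Fin.last n), Fin.sum_univ_castSucc, h, Fin.succAbove_last,
    ← two_mul]

theorem det_eq_mul_det_sub_mul_succ {n : ℕ} {A : Matrix (Fin (n + 1)) (Fin (n + 1)) R}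
    (c : Fin n → R) (h : ∀ j, A (Fin.last n) j.castSucc = c j * A (Fin.last n) j.succ) :
    A.det = A (Fin.last n) (Fin.last n) *
      (Matrix.of fun i j => A i.castSucc j.castSucc - c j * A i.castSucc j.succ).det := by
  let B : Matrix (Fin (n + 1)) (Fin (n + 1)) R := Matrix.of fun i =>
    Fin.lastCases (A i (Fin.last n)) fun j => A i j.castSucc - c j * A i j.succ
  have hAB : A.det = B.det :=
    det_eq_of_forall_col_eq_smul_add_succ c (by simp [B]) (by simp [B])
  rw [hAB, det_eq_mul_det_castSucc_of_last_row_eq_zero (by simp [B, h])]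
  refine congrArg₂ (· * ·) ?_ (congrArg Matrix.det (Matrix.ext fun i j => ?_)) <;> simp [B]

theorem det_sum_columns {ι κ : Type*} [Fintype ι] [DecidableEq ι] (s : ι → Finset κ)
    (g : ι → ι → κ → R) :
    (Matrix.of fun i j => ∑ m ∈ s j, g i j m).det =
      ∑ μ ∈ Fintype.piFinset s, (Matrix.of fun i j => g i j (μ j)).det := by
  have expand := (Matrix.detRowAlternating (n := ι) (R := R)).toMultilinearMap.map_sum_finset
    (fun j m i => g i j m) s
  simp only [← Matrix.det_transpose (Matrix.of _)]
  convert! expand using 2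
  exact congrArg Matrix.det (Matrix.ext fun j i => by simp)

end Determinant

section Interlacing

variable {n : ℕ} {D : Fin (n + 1) → ℕ} {μ : Fin n → ℕ}

/-- The sequences `μ` that interlace `D`, that is `D_{j+1} ≤ μ_j ≤ D_j` for all `j`. They are the
shapes left after removing a horizontal strip, including the whole last row, from the shape `D`. -/
def interlacing (D : Fin (n + 1) → ℕ) : Finset (Fin n → ℕ) :=
  Fintype.piFinset fun j => Icc (D j.succ) (D j.castSucc)

theorem mem_interlacing : μ ∈ interlacing D ↔ ∀ j, D j.succ ≤ μ j ∧ μ j ≤ D j.castSucc := by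
  simp [interlacing]

theorem interlacing_zero : interlacing (0 : Fin (n + 1) → ℕ) = {0} := by
  ext μ
  simp [mem_interlacing, funext_iff]

theorem antitone_of_mem_interlacing (hμ : μ ∈ interlacing D) : Antitone μ := by
  cases n with
  | zero => exact fun i => i.elim0
  | succ n =>
    refine Fin.antitone_iff_succ_le.2 fun j => ?_
    exact (mem_interlacing.1 hμ j.succ).2.trans (mem_interlacing.1 hμ j.castSucc).1

theorem sum_sub_sum_of_mem_interlacing (hμ : μ ∈ interlacing D) :
    ∑ j, D j - ∑ j, μ j = D (Fin.last n) + ∑ j, (D j.castSucc - μ j) := by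
  have hle : ∀ j ∈ univ, μ j ≤ D j.castSucc := fun j _ => (mem_interlacing.1 hμ j).2
  have hsum := sum_le_sum hle
  rw [Fin.sum_univ_castSucc, sum_tsub_distrib _ hle]
  omega

end Interlacing

section Alternant

variable {R : Type*} [CommRing R] {n : ℕ}

/-- The alternant `det (x_i ^ (D_j + n - 1 - j))` with `j` counted from `0`, the numerator of the
Schur polynomial of `D`; its denominator is `alternant 0 x`. -/
def alternant (D : Fin n → ℕ) (x : Fin n → R) : R :=
  (Matrix.of fun i j => x i ^ (D j + (j.rev : ℕ))).det

theorem alternant_eq_det_pow_add_sub (D : Fin n → ℕ) (x : Fin n → R) :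
    alternant D x = (Matrix.of fun i j : Fin n => x i ^ (D j + (n - 1 - (j : ℕ)))).det := by
  simp only [alternant, Fin.val_rev, Nat.sub_sub, add_comm 1]

theorem pow_sub_pow_mul_pow (x y : R) (e : ℕ) {a b : ℕ} (h : a ≤ b) :
    x ^ (b + (e + 1)) - y ^ (b + 1 - a) * x ^ (a + e) =
      (x - y) * ∑ m ∈ Icc a b, y ^ (b - m) * x ^ (m + e) := by
  have geom := mul_geom_sum₂_Ico x y (h.trans b.le_succ)
  calc x ^ (b + (e + 1)) - y ^ (b + 1 - a) * x ^ (a + e)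
      = (x ^ (b + 1) - x ^ a * y ^ (b + 1 - a)) * x ^ e := by ring
    _ = (x - y) * ((∑ m ∈ Icc a b, x ^ m * y ^ (b - m)) * x ^ e) := by
      rw [← mul_assoc, ← Ico_add_one_right_eq_Icc]
      exact congrArg (· * x ^ e) geom.symm
    _ = (x - y) * ∑ m ∈ Icc a b, y ^ (b - m) * x ^ (m + e) := by
      rw [sum_mul]
      exact congrArg _ (sum_congr rfl fun m _ => by ring)

theorem alternant_eq_mul_det_sum_Icc {D : Fin (n + 1) → ℕ} (hD : Antitone D)
    (x : Fin (n + 1) → R) :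
    alternant D x = x (Fin.last n) ^ D (Fin.last n) *
      ((∏ i : Fin n, (x i.castSucc - x (Fin.last n))) *
        (Matrix.of fun i j : Fin n => ∑ m ∈ Icc (D j.succ) (D j.castSucc),
          x (Fin.last n) ^ (D j.castSucc - m) * x i.castSucc ^ (m + (j.rev : ℕ))).det) := by
  have hstep (j : Fin n) : D j.succ ≤ D j.castSucc := hD j.castSucc_lt_succ.le
  rw [alternant, det_eq_mul_det_sub_mul_succ
    (fun j => x (Fin.last n) ^ (D j.castSucc + 1 - D j.succ)), ← Matrix.det_mul_column]
  · congr 2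
    · simp
    · ext i j
      simpa only [Matrix.of_apply, Fin.rev_castSucc, Fin.rev_succ, Fin.val_succ,
        Fin.val_castSucc] using pow_sub_pow_mul_pow (x i.castSucc) (x (Fin.last n)) j.rev (hstep j)
  · intro j
    have := hstep j
    simp only [Matrix.of_apply, Fin.rev_castSucc, Fin.rev_succ, Fin.val_succ, Fin.val_castSucc,
      ← pow_add]
    congr 1
    omega

theorem alternant_succ {D : Fin (n + 1) → ℕ} (hD : Antitone D) (x : Fin (n + 1) → R) :
    alternant D x = (∏ i : Fin n, (x i.castSucc - x (Fin.last n))) *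
      ∑ μ ∈ interlacing D,
        x (Fin.last n) ^ (∑ j, D j - ∑ j, μ j) * alternant μ (Fin.init x) := by
  rw [alternant_eq_mul_det_sum_Icc hD, mul_left_comm, det_sum_columns, mul_sum]
  refine congrArg _ (sum_congr rfl fun μ hμ => ?_)
  rw [sum_sub_sum_of_mem_interlacing hμ, pow_add, mul_assoc, ← prod_pow_eq_pow_sum, alternant,
    ← Matrix.det_mul_row]
  rfl

theorem alternant_zero_succ (x : Fin (n + 1) → R) :
    alternant 0 x = (∏ i : Fin n, (x i.castSucc - x (Fin.last n))) *
      alternant 0 (Fin.init x) := by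
  simp [alternant_succ (D := 0) antitone_const, interlacing_zero]

end Alternant

section Cells

variable {l : ℕ} {D : Fin l → ℕ}

/-- The Young diagram with row lengths `D`, as the set of pairs `(i, j)` of a column `i` and a
row `j`, both counted from `1`. -/
def cells (D : Fin l → ℕ) : Finset (ℕ × ℕ) :=
  univ.biUnion fun j : Fin l => Icc 1 (D j) ×ˢ {(j : ℕ) + 1}

theorem mem_cells {i j : ℕ} :
    (i, j) ∈ cells D ↔ ∃ r : Fin l, (1 ≤ i ∧ i ≤ D r) ∧ j = r + 1 := by
  simp [cells, eq_comm]

theorem mk_succ_mem_cells {i : ℕ} {j : Fin l} :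
    (i, (j : ℕ) + 1) ∈ cells D ↔ 1 ≤ i ∧ i ≤ D j := by
  simp [mem_cells, Fin.val_inj]

theorem card_cells (D : Fin l → ℕ) : #(cells D) = ∑ j, D j := by
  rw [cells, card_biUnion]
  · simp
  · intro j _ j' _ hj
    refine disjoint_product.2 (Or.inr ?_)
    simpa [Fin.val_inj] using hj

theorem cells_append_zero (k : ℕ) : cells (Fin.append D (0 : Fin k → ℕ)) = cells D := by
  ext ⟨i, j⟩
  simp only [mem_cells]
  constructor
  · rintro ⟨r, hi, rfl⟩
    induction r using Fin.addCases with
    | left r => exact ⟨r, by simpa using hi⟩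
    | right r =>
      rw [Fin.append_right, Pi.zero_apply] at hi
      omega
  · rintro ⟨r, hi, rfl⟩
    exact ⟨r.castAdd k, by simpa using hi⟩

theorem cells_eq_filter (D : Fin l → ℕ) :
    cells D = (Icc 1 (univ.sup D) ×ˢ Icc 1 l).filter
      fun p => p.1 ≤ if h : 1 ≤ p.2 ∧ p.2 ≤ l then D ⟨p.2 - 1, by omega⟩ else 0 := by
  ext ⟨i, j⟩
  simp only [mem_cells, mem_filter, mem_product, mem_Icc]
  constructor
  · rintro ⟨r, ⟨hi, hir⟩, rfl⟩
    have hr : 1 ≤ (r : ℕ) + 1 ∧ (r : ℕ) + 1 ≤ l := by omega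
    exact ⟨⟨⟨hi, hir.trans (le_sup (mem_univ r))⟩, hr⟩, by simpa [hr] using hir⟩
  · rintro ⟨⟨⟨hi, -⟩, hj⟩, hij⟩
    rw [dif_pos hj] at hij
    exact ⟨_, ⟨hi, hij⟩, (Nat.sub_add_cancel hj.1).symm⟩

theorem cells_subset_cells {n : ℕ} {D : Fin (n + 1) → ℕ} {μ : Fin n → ℕ}
    (hμ : μ ∈ interlacing D) : cells μ ⊆ cells D := by
  rintro ⟨i, j⟩ hp
  obtain ⟨r, hi, hr⟩ := mem_cells.1 hp
  exact mem_cells.2 ⟨r.castSucc, ⟨hi.1, hi.2.trans (mem_interlacing.1 hμ r).2⟩, hr⟩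

end Cells

section Semistandard

variable {n : ℕ} {C C' : Finset (ℕ × ℕ)}

/-- A filling of a set of cells `(i, j)` is semistandard if its entries weakly increase along each
row (in `i`) and strictly increase down each column (in `j`), from a cell to its neighbour. -/
def IsSemistandard (f : C → Fin n) : Prop :=
  (∀ p q : C, p.1.1 + 1 = q.1.1 → p.1.2 = q.1.2 → f p ≤ f q) ∧
  ∀ p q : C, p.1.1 = q.1.1 → p.1.2 + 1 = q.1.2 → f p < f q

theorem IsSemistandard.apply_le_apply {l : ℕ} {D : Fin l → ℕ} {f : cells D → Fin n}
    (hf : IsSemistandard f) {i i' j : ℕ} (h : (i, j) ∈ cells D) (h' : (i', j) ∈ cells D)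
    (hi : i ≤ i') : f ⟨(i, j), h⟩ ≤ f ⟨(i', j), h'⟩ := by
  induction i', hi using Nat.le_induction with
  | base => exact le_rfl
  | succ k hk ih =>
    have hmem : (k, j) ∈ cells D := by
      obtain ⟨_, ⟨hpos, _⟩, _⟩ := mem_cells.1 h
      obtain ⟨r, ⟨_, hkr⟩, hr⟩ := mem_cells.1 h'
      exact mem_cells.2 ⟨r, ⟨hpos.trans hk, (Nat.le_succ k).trans hkr⟩, hr⟩
    exact (ih hmem).trans (hf.1 _ _ rfl rfl)

theorem IsSemistandard.le_apply {l : ℕ} {D : Fin l → ℕ} (hD : Antitone D) {f : cells D → Fin n}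
    (hf : IsSemistandard f) {i j : ℕ} (hj : j < l) (h : (i, j + 1) ∈ cells D) :
    j ≤ f ⟨(i, j + 1), h⟩ := by
  induction j with
  | zero => exact Nat.zero_le _
  | succ j ih =>
    have hmem : (i, j + 1) ∈ cells D := by
      have hi := (mk_succ_mem_cells (j := ⟨j + 1, hj⟩)).1 h
      exact (mk_succ_mem_cells (j := ⟨j, by omega⟩)).2 ⟨hi.1, hi.2.trans (hD (by simp))⟩
    have hlt : f ⟨(i, j + 1), hmem⟩ < f ⟨(i, j + 1 + 1), h⟩ := hf.2 _ _ rfl rfl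
    exact (ih (by omega) hmem).trans_lt hlt

/-- The filling of `C` that agrees with `g` on `C'` and has the new largest letter elsewhere. -/
def extendByLast (C : Finset (ℕ × ℕ)) (g : C' → Fin n) (p : C) : Fin (n + 1) :=
  if h : p.1 ∈ C' then (g ⟨p, h⟩).castSucc else Fin.last n

theorem extendByLast_of_mem (g : C' → Fin n) {p : C} (h : p.1 ∈ C') :
    extendByLast C g p = (g ⟨p, h⟩).castSucc :=
  dif_pos h

theorem extendByLast_of_notMem (g : C' → Fin n) {p : C} (h : p.1 ∉ C') :
    extendByLast C g p = Fin.last n :=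
  dif_neg h

theorem extendByLast_ne_last {g : C' → Fin n} {p : C} :
    extendByLast C g p ≠ Fin.last n ↔ p.1 ∈ C' := by
  by_cases h : p.1 ∈ C' <;> simp [extendByLast, h, Fin.castSucc_ne_last]

theorem extendByLast_injective (hC : C' ⊆ C) :
    Function.Injective (extendByLast C : (C' → Fin n) → C → Fin (n + 1)) := by
  intro g g' h
  funext p
  simpa [extendByLast] using congrFun h ⟨p, hC p.2⟩

theorem exists_extendByLast_eq (hC : C' ⊆ C) {f : C → Fin (n + 1)}
    (hf : ∀ p, f p ≠ Fin.last n ↔ p.1 ∈ C') : ∃ g : C' → Fin n, extendByLast C g = f := by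
  refine ⟨fun p => (f ⟨p, hC p.2⟩).castPred ((hf _).2 p.2), funext fun p => ?_⟩
  by_cases hp : p.1 ∈ C'
  · simp [extendByLast_of_mem _ hp]
  · rw [extendByLast_of_notMem _ hp, not_not.1 (mt (hf p).1 hp)]

theorem isSemistandard_of_extendByLast (hC : C' ⊆ C) {g : C' → Fin n}
    (hg : IsSemistandard (extendByLast C g)) : IsSemistandard g := by
  refine ⟨fun p q h₁ h₂ => ?_, fun p q h₁ h₂ => ?_⟩
  · simpa [extendByLast] using hg.1 ⟨p, hC p.2⟩ ⟨q, hC q.2⟩ h₁ h₂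
  · simpa [extendByLast] using hg.2 ⟨p, hC p.2⟩ ⟨q, hC q.2⟩ h₁ h₂

theorem isSemistandard_extendByLast {g : C' → Fin n} (hg : IsSemistandard g)
    (left_mem : ∀ i j, (i, j) ∈ C → (i + 1, j) ∈ C' → (i, j) ∈ C')
    (above_mem : ∀ i j, (i, j) ∈ C → (i, j + 1) ∈ C → (i, j) ∈ C') :
    IsSemistandard (extendByLast C g) := by
  constructor
  · rintro ⟨⟨i, j⟩, hp⟩ ⟨⟨_, _⟩, hq⟩ rfl rfl
    by_cases hq' : (i + 1, j) ∈ C'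
    · rw [extendByLast_of_mem g (left_mem i j hp hq'), extendByLast_of_mem g hq']
      exact hg.1 _ _ rfl rfl
    · rw [extendByLast_of_notMem (p := ⟨(i + 1, j), hq⟩) g hq']
      exact Fin.le_last _
  · rintro ⟨⟨i, j⟩, hp⟩ ⟨⟨_, _⟩, hq⟩ rfl rfl
    rw [extendByLast_of_mem (p := ⟨(i, j), hp⟩) g (above_mem i j hp hq)]
    by_cases hq' : (i, j + 1) ∈ C'
    · rw [extendByLast_of_mem g hq']
      exact hg.2 _ _ rfl rfl
    · rw [extendByLast_of_notMem g hq']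
      exact Fin.castSucc_lt_last _

theorem prod_extendByLast {M : Type*} [CommMonoid M] (hC : C' ⊆ C) (g : C' → Fin n)
    (x : Fin (n + 1) → M) :
    ∏ p : C, x (extendByLast C g p) =
      x (Fin.last n) ^ (#C - #C') * ∏ p : C', Fin.init x (g p) := by
  let F (p : ℕ × ℕ) : M := x (if h : p ∈ C' then (g ⟨p, h⟩).castSucc else Fin.last n)
  have prod_inner : ∏ p ∈ C', F p = ∏ p : C', Fin.init x (g p) := by
    rw [← prod_coe_sort C' F]
    exact prod_congr rfl fun p _ => by simp [F, Fin.init]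
  have prod_strip : ∏ p ∈ C \ C', F p = x (Fin.last n) ^ (#C - #C') := by
    rw [← card_sdiff_of_subset hC]
    exact prod_eq_pow_card fun p hp => by simp [F, (mem_sdiff.1 hp).2]
  calc ∏ p : C, x (extendByLast C g p) = ∏ p ∈ C, F p := prod_coe_sort C F
    _ = _ := by rw [← prod_sdiff hC, prod_strip, prod_inner]

end Semistandard

section InnerShape

variable {n : ℕ} {D : Fin (n + 1) → ℕ}

/-- The row lengths of the part of a filling whose entries are not the largest letter. -/
def innerShape {C : Finset (ℕ × ℕ)} (f : C → Fin (n + 1)) (j : Fin n) : ℕ :=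
  ({p | p.1.2 = j + 1 ∧ f p ≠ Fin.last n} : Finset C).sup fun p => p.1.1

theorem le_innerShape {C : Finset (ℕ × ℕ)} {f : C → Fin (n + 1)} {i : ℕ} {j : Fin n}
    (h : (i, (j : ℕ) + 1) ∈ C) (hf : f ⟨_, h⟩ ≠ Fin.last n) : i ≤ innerShape f j :=
  le_sup (f := fun p : C => p.1.1) (b := ⟨(i, (j : ℕ) + 1), h⟩) (by simpa using hf)

theorem innerShape_le {C : Finset (ℕ × ℕ)} {f : C → Fin (n + 1)} {j : Fin n} {m : ℕ}
    (h : ∀ i (hi : (i, (j : ℕ) + 1) ∈ C), f ⟨_, hi⟩ ≠ Fin.last n → i ≤ m) :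
    innerShape f j ≤ m := by
  refine Finset.sup_le ?_
  rintro ⟨⟨i, _⟩, hp⟩ hne
  obtain ⟨rfl, hlast⟩ := (mem_filter.1 hne).2
  exact h i hp hlast

theorem le_innerShape_iff {f : cells D → Fin (n + 1)} (hf : IsSemistandard f) {i : ℕ} {j : Fin n}
    (h : (i, (j : ℕ) + 1) ∈ cells D) : i ≤ innerShape f j ↔ f ⟨_, h⟩ ≠ Fin.last n := by
  refine ⟨fun hle => ?_, le_innerShape h⟩
  have hi : 0 < i := (mk_succ_mem_cells (j := j.castSucc)).1 h |>.1
  obtain ⟨⟨⟨i', _⟩, hq⟩, hne, hle⟩ := (Finset.le_sup_iff hi).1 hle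
  obtain ⟨rfl, hlast⟩ := (mem_filter.1 hne).2
  exact ((hf.apply_le_apply h hq hle).trans_lt (Fin.lt_last_iff_ne_last.2 hlast)).ne

theorem innerShape_mem_interlacing (hD : Antitone D) {f : cells D → Fin (n + 1)}
    (hf : IsSemistandard f) : innerShape f ∈ interlacing D := by
  refine mem_interlacing.2 fun j => ⟨?_, innerShape_le fun i hi _ => ?_⟩
  · rcases Nat.eq_zero_or_pos (D j.succ) with hzero | hpos
    · exact hzero ▸ Nat.zero_le _
    have lower : (D j.succ, (j : ℕ) + 1 + 1) ∈ cells D :=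
      (mk_succ_mem_cells (j := j.succ)).2 ⟨hpos, le_rfl⟩
    have upper : (D j.succ, (j : ℕ) + 1) ∈ cells D :=
      (mk_succ_mem_cells (j := j.castSucc)).2 ⟨hpos, hD j.castSucc_lt_succ.le⟩
    exact le_innerShape upper
      ((hf.2 ⟨_, upper⟩ ⟨_, lower⟩ rfl rfl).trans_le (Fin.le_last _)).ne
  · exact ((mk_succ_mem_cells (j := j.castSucc)).1 hi).2

theorem ne_last_iff_mem_cells_innerShape (hD : Antitone D) {f : cells D → Fin (n + 1)}
    (hf : IsSemistandard f) (p : cells D) : f p ≠ Fin.last n ↔ p.1 ∈ cells (innerShape f) := by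
  obtain ⟨⟨i, _⟩, hp⟩ := p
  obtain ⟨j, hi, rfl⟩ := mem_cells.1 hp
  induction j using Fin.lastCases with
  | last =>
    have hlast : f ⟨_, hp⟩ = Fin.last n := Fin.last_le_iff.1 (hf.le_apply hD (by simp) hp)
    have not_mem : (i, (Fin.last n : ℕ) + 1) ∉ cells (innerShape f) := fun h => by
      obtain ⟨r, _, hr⟩ := mem_cells.1 h
      rw [Fin.val_last] at hr
      omega
    exact iff_of_false (not_not_intro hlast) not_mem
  | cast j =>
    exact (le_innerShape_iff hf hp).symm.trans
      ((and_iff_right hi.1).symm.trans mk_succ_mem_cells.symm)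

theorem innerShape_extendByLast {C : Finset (ℕ × ℕ)} {μ : Fin n → ℕ} (hC : cells μ ⊆ C)
    (g : cells μ → Fin n) : innerShape (extendByLast C g) = μ := by
  funext j
  refine le_antisymm (innerShape_le fun i hi hne => ?_) ?_
  · exact (mk_succ_mem_cells.1 (extendByLast_ne_last.1 hne)).2
  · rcases Nat.eq_zero_or_pos (μ j) with hzero | hpos
    · exact hzero ▸ Nat.zero_le _
    have hmem : (μ j, (j : ℕ) + 1) ∈ cells μ := mk_succ_mem_cells.2 ⟨hpos, le_rfl⟩
    exact le_innerShape (hC hmem) (extendByLast_ne_last.2 hmem)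

theorem isSemistandard_extendByLast_of_mem_interlacing {μ : Fin n → ℕ} (hμ : μ ∈ interlacing D)
    {g : cells μ → Fin n} (hg : IsSemistandard g) :
    IsSemistandard (extendByLast (cells D) g) := by
  refine isSemistandard_extendByLast hg (fun i j hp hq => ?_) fun i j hp hq => ?_
  · obtain ⟨r, hi, hr⟩ := mem_cells.1 hq
    obtain ⟨_, ⟨hpos, _⟩, _⟩ := mem_cells.1 hp
    exact mem_cells.2 ⟨r, ⟨hpos, (Nat.le_succ i).trans hi.2⟩, hr⟩
  · obtain ⟨r, hi, hr⟩ := mem_cells.1 hq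
    obtain ⟨s, _, hs⟩ := mem_cells.1 hp
    have hr_ne : r ≠ 0 := fun h => by
      rw [h, Fin.val_zero] at hr
      omega
    obtain ⟨t, rfl⟩ := Fin.exists_succ_eq.2 hr_ne
    exact mem_cells.2 ⟨t, ⟨hi.1, hi.2.trans (mem_interlacing.1 hμ t).1⟩, by simpa using hr⟩

end InnerShape

section TableauSum

variable {R : Type*} [CommSemiring R] {n : ℕ}

/-- The generating function of the semistandard fillings of a set of cells with `n` letters. -/
noncomputable def tableauSum (C : Finset (ℕ × ℕ)) (x : Fin n → R) : R :=
  ∑ f : C → Fin n with IsSemistandard f, ∏ p, x (f p)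

theorem tableauSum_empty (x : Fin n → R) : tableauSum ∅ x = 1 := by
  simp [tableauSum, IsSemistandard]

theorem sum_isSemistandard_innerShape_eq {D : Fin (n + 1) → ℕ} (hD : Antitone D) {μ : Fin n → ℕ}
    (hμ : μ ∈ interlacing D) (x : Fin (n + 1) → R) :
    ∑ f : cells D → Fin (n + 1) with IsSemistandard f ∧ innerShape f = μ, ∏ p, x (f p) =
      x (Fin.last n) ^ (∑ j, D j - ∑ j, μ j) * tableauSum (cells μ) (Fin.init x) := by
  have hC := cells_subset_cells hμ
  rw [tableauSum, mul_sum]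
  symm
  refine sum_nbij (extendByLast (cells D)) (fun g hg => ?_) (extendByLast_injective hC).injOn
    (fun f hf => ?_) fun g _ => ?_
  · simp only [mem_filter_univ] at hg ⊢
    exact ⟨isSemistandard_extendByLast_of_mem_interlacing hμ hg, innerShape_extendByLast hC g⟩
  · obtain ⟨hf, hinner⟩ : IsSemistandard f ∧ innerShape f = μ := by simpa using hf
    obtain ⟨g, rfl⟩ :=
      exists_extendByLast_eq hC (hinner ▸ ne_last_iff_mem_cells_innerShape hD hf)
    exact ⟨g, by simpa using isSemistandard_of_extendByLast hC hf, rfl⟩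
  · rw [prod_extendByLast hC, card_cells, card_cells]

theorem tableauSum_cells_succ {D : Fin (n + 1) → ℕ} (hD : Antitone D) (x : Fin (n + 1) → R) :
    tableauSum (cells D) x = ∑ μ ∈ interlacing D,
      x (Fin.last n) ^ (∑ j, D j - ∑ j, μ j) * tableauSum (cells μ) (Fin.init x) := by
  rw [tableauSum, ← sum_fiberwise_of_maps_to (g := innerShape)
    fun f hf => innerShape_mem_interlacing hD (mem_filter.1 hf).2]
  refine sum_congr rfl fun μ hμ => ?_
  rw [filter_filter, sum_isSemistandard_innerShape_eq hD hμ]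

end TableauSum

theorem alternant_zero_mul_tableauSum_cells {R : Type*} [CommRing R] {n : ℕ} {D : Fin n → ℕ}
    (hD : Antitone D) (x : Fin n → R) :
    alternant 0 x * tableauSum (cells D) x = alternant D x := by
  induction n with
  | zero => simp [alternant, cells, tableauSum_empty]
  | succ n ih =>
    rw [alternant_zero_succ, tableauSum_cells_succ hD, alternant_succ hD, mul_assoc, mul_sum]
    refine congrArg _ (sum_congr rfl fun μ hμ => ?_)
    rw [← ih (antitone_of_mem_interlacing hμ), mul_left_comm]

theorem antitone_append_zero {l : ℕ} {d : Fin l → ℕ} (hd : Antitone d) (k : ℕ) :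
    Antitone (Fin.append d (0 : Fin k → ℕ)) := by
  intro i j hij
  induction j using Fin.addCases with
  | right j => simp
  | left j =>
    induction i using Fin.addCases with
    | left i => simpa using hd (show i ≤ j from hij)
    | right i =>
      rw [Fin.le_def, Fin.val_natAdd, Fin.val_castAdd] at hij
      omega

theorem append_zero_apply {l k : ℕ} (d : Fin l → ℕ) (j : Fin (l + k)) :
    Fin.append d 0 j = if h : (j : ℕ) < l then d ⟨j, h⟩ else 0 := by
  induction j using Fin.addCases with
  | left j => simp
  | right j => simp

end SchurTableau

open SchurTableau in
theorem stmt_6_general {R : Type*} [CommRing R] {l K : ℕ} {d : Fin l → ℕ} (hd : Antitone d)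
    (x : Fin (l + K) → R) :
    alternant 0 x * tableauSum (cells d) x = alternant (Fin.append d 0) x := by
  rw [← cells_append_zero K, alternant_zero_mul_tableauSum_cells (antitone_append_zero hd K)]

/-- Kostka's combinatorial description of Schur polynomials: for a weakly decreasing sequence
`(d_1,…,d_l)` of nonnegative integers, padded by zeros to `n = l + k` variables, the
bialternant Schur polynomial equals the generating function of `n`-semistandard Young
tableaux of shape `(d_i)`; stated with denominators cleared:
`det(x_i^{n-1-j}) · Σ_{f ∈ SST_n(d)} ∏_{(i,j) ∈ T(d)} x_{f(i,j)} = det(x_i^{D_j + n-1-j})`,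
where `D` is the padded partition and the tableau `T(d) = {(i,j) : 1 ≤ j ≤ l, 1 ≤ i ≤ d_j}`,
a semistandard filling satisfying `f(i,j) ≤ f(i+1,j)` and `f(i,j) < f(i,j+1)`. -/
theorem stmt_6 (l K : ℕ) (d : Fin l → ℕ) (hd : Antitone d) (x : Fin (l + K) → ℚ) :
    -- the cells of the Young tableau, as pairs `(i, j)` with `1 ≤ j ≤ l`, `1 ≤ i ≤ d_j`
    ∀ dval : ℕ → ℕ, (dval = fun j => if h : 1 ≤ j ∧ j ≤ l then d ⟨j - 1, by omega⟩ else 0) →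
    ∀ cells : Finset (ℕ × ℕ),
      (cells = (Finset.Icc 1 (Finset.univ.sup d) ×ˢ Finset.Icc 1 l).filter
        (fun p => p.1 ≤ dval p.2)) →
    Matrix.det (Matrix.of fun i j : Fin (l + K) => x i ^ (l + K - 1 - (j : ℕ)))
        * ∑ f ∈ (Finset.univ : Finset (↥cells → Fin (l + K))).filter
            (fun f => (∀ p q : ↥cells, (p : ℕ × ℕ).1 + 1 = (q : ℕ × ℕ).1 →
                  (p : ℕ × ℕ).2 = (q : ℕ × ℕ).2 → f p ≤ f q) ∧
                (∀ p q : ↥cells, (p : ℕ × ℕ).1 = (q : ℕ × ℕ).1 →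
                  (p : ℕ × ℕ).2 + 1 = (q : ℕ × ℕ).2 → f p < f q)),
            ∏ p : ↥cells, x (f p)
      = Matrix.det (Matrix.of fun i j : Fin (l + K) =>
          x i ^ ((if h : (j : ℕ) < l then d ⟨j, h⟩ else 0) + (l + K - 1 - (j : ℕ)))) := by
  rintro _ rfl cells hcells
  obtain rfl : cells = SchurTableau.cells d := hcells.trans (SchurTableau.cells_eq_filter d).symm
  simpa [SchurTableau.alternant_eq_det_pow_add_sub, SchurTableau.append_zero_apply,
    SchurTableau.tableauSum, SchurTableau.IsSemistandard] using stmt_6_general hd x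
end

section
/- For l ≥ 3, let α = (l-3, l-3, l-3, l-4, l-5, …, 1, 0) and δ = (l-1, l-2, …, 1, 0). Then s_δ(x_1,…,x_l) - (x_{l-1} x_l² + x_{l-1}² x_l) · s_α(x_1,…,x_l) is a polynomial with nonnegative coefficients. -/
open MvPolynomial

/-!
Write `V` for the Vandermonde determinant, so that `s_δ(x) = V(x²) / V(x)`, and split off the first
variable `x₀`, writing `x'` for the remaining ones. Then `V(x²) = ∏ᵢ (x'ᵢ² - x₀²) · V(x'²)`.
The exponents of the alternant `s_α · V` are all the even numbers `0, 2, …, 2(m + 1)` together with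
the single odd number `2m + 1`, where `l = m + 3`; expanding along the odd column and applying the
Leibniz rule for divided differences at the nodes `xᵢ²` gives
`s_α(x) = ∏ᵢ (x₀ + x'ᵢ) · s_α'(x') - x₀² · s_β(x)` for another Schur polynomial `s_β`. Hence, with
`w = x_{l-1} x_l² + x_{l-1}² x_l`,
`s_δ(x) - w s_α(x) = ∏ᵢ (x₀ + x'ᵢ) · (s_δ'(x') - w s_α'(x')) + w x₀² s_β(x)`,
and induction on `l` reduces the claim to the positivity of Schur polynomials, which is the
branching rule.
-/

section Alternant

variable {R : Type*} [CommRing R] {n : ℕ}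

/-- The alternant `det (x_i ^ a_j)`, the numerator of the bialternant formula for the exponents
`a = λ + δ`; here the exponents usually increase with the column. -/
def alternant (x : Fin n → R) (a : Fin n → ℕ) : R :=
  (Matrix.of fun i j => x i ^ a j).det

theorem alternant_eq_sign_revPerm_mul (x : Fin n → R) {a b : Fin n → ℕ}
    (h : ∀ j, b j = a j.rev) :
    alternant x b = (Equiv.Perm.sign (Fin.revPerm (n := n)) : ℤ) * alternant x a := by
  obtain rfl : b = a ∘ Fin.revPerm := funext h
  exact Matrix.det_permute' Fin.revPerm (Matrix.of fun i j => x i ^ a j)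

theorem det_vandermonde_sq (x : Fin n → R) :
    (Matrix.vandermonde fun i => x i ^ 2).det = alternant x fun j => 2 * j := by
  simp only [alternant, pow_mul]
  rfl

theorem det_vandermonde_succ (x : Fin (n + 1) → R) :
    (Matrix.vandermonde x).det =
      (∏ i : Fin n, (x i.succ - x 0)) * (Matrix.vandermonde fun i : Fin n => x i.succ).det := by
  simp [Matrix.det_vandermonde, Fin.prod_univ_succ]

end Alternant

section Branching

/-- The exponent vectors `b` with `a 0 ≤ b 0 < a 1 ≤ b 1 < a 2 ≤ …`: in terms of partitions, those
that interlace with `a`. -/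
def interlacing {n : ℕ} (a : Fin (n + 1) → ℕ) : Finset (Fin n → ℕ) :=
  Fintype.piFinset fun j => Finset.Ico (a j.castSucc) (a j.succ)

theorem strictMono_of_mem_interlacing {n : ℕ} {a : Fin (n + 1) → ℕ} (ha : Monotone a)
    {b : Fin n → ℕ} (hb : b ∈ interlacing a) : StrictMono b := fun i j hij =>
  have mem_Ico k := Finset.mem_Ico.1 (Fintype.mem_piFinset.1 hb k)
  calc
    b i < a i.succ := (mem_Ico i).2
    _ ≤ a j.castSucc := ha (Fin.succ_le_castSucc_iff.2 hij)
    _ ≤ b j := (mem_Ico j).1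

/-- The Schur polynomial of the partition `λ_j = a j - j` (parts in increasing order), evaluated at
`x` and defined by the branching rule in the first variable, so that positivity is visible. -/
def schur {R : Type*} [CommSemiring R] : {n : ℕ} → (Fin n → R) → (Fin n → ℕ) → R
  | 0, _, _ => 1
  | _ + 1, x, a => x 0 ^ a 0 * ∑ b ∈ interlacing a,
      (∏ j, x 0 ^ (a j.succ - 1 - b j)) * schur (fun i => x i.succ) b

theorem schur_mem {R : Type*} [CommSemiring R] (P : Subsemiring R) {n : ℕ} {x : Fin n → R}
    (hx : ∀ i, x i ∈ P) (a : Fin n → ℕ) : schur x a ∈ P := by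
  induction n with
  | zero => exact P.one_mem
  | succ n ih =>
    exact P.mul_mem (P.pow_mem (hx 0) _) <| P.sum_mem fun b _ =>
      P.mul_mem (P.prod_mem fun j _ => P.pow_mem (hx 0) _) (ih (fun i => hx i.succ) b)

variable {R : Type*} [CommRing R] {n : ℕ}

theorem det_of_sum_col {m ι : Type*} [Fintype m] [DecidableEq m] (s : m → Finset ι)
    (f : m → ι → m → R) :
    (Matrix.of fun i j => ∑ t ∈ s j, f j t i).det =
      ∑ b ∈ Fintype.piFinset s, (Matrix.of fun i j => f j (b j) i).det := by
  calc
    _ = Matrix.detRowAlternating fun j => ∑ t ∈ s j, f j t := by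
      rw [← Matrix.det_transpose]
      congr 1
      ext i j
      simp [Finset.sum_apply]
    _ = ∑ b ∈ Fintype.piFinset s, Matrix.detRowAlternating fun j => f j (b j) :=
      Matrix.detRowAlternating.toMultilinearMap.map_sum_finset f s
    _ = _ := Finset.sum_congr rfl fun b _ => Matrix.det_transpose (Matrix.of fun i j => f j (b j) i)

theorem det_eq_mul_det_of_row_zero_eq_mul (A : Matrix (Fin (n + 1)) (Fin (n + 1)) R)
    (c : Fin n → R) (h : ∀ j, A 0 j.succ = c j * A 0 j.castSucc) :
    A.det = A 0 0 *
      (Matrix.of fun i j : Fin n => A i.succ j.succ - c j * A i.succ j.castSucc).det := by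
  let B : Matrix (Fin (n + 1)) (Fin (n + 1)) R := Matrix.of fun i =>
    Fin.cons (A i 0) fun j => A i j.succ - c j * A i j.castSucc
  have hAB : A.det = B.det :=
    Matrix.det_eq_of_forall_col_eq_smul_add_pred c (fun i => by simp [B]) fun i j => by simp [B]
  rw [hAB, Matrix.det_succ_row_zero, Fin.sum_univ_succ]
  simp [B, h, Matrix.submatrix]

theorem pow_sub_pow_mul_pow_eq_mul_sum_Ico (x y : R) {p q : ℕ} (hpq : p ≤ q) :
    y ^ q - x ^ (q - p) * y ^ p = (y - x) * ∑ t ∈ Finset.Ico p q, x ^ (q - 1 - t) * y ^ t := by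
  obtain ⟨d, rfl⟩ := Nat.exists_eq_add_of_le hpq
  have hsum : ∑ t ∈ Finset.Ico p (p + d), x ^ (p + d - 1 - t) * y ^ t =
      y ^ p * ∑ k ∈ Finset.range d, y ^ k * x ^ (d - 1 - k) := by
    rw [Finset.sum_Ico_eq_sum_range, Nat.add_sub_cancel_left, Finset.mul_sum]
    refine Finset.sum_congr rfl fun k _ => ?_
    rw [show p + d - 1 - (p + k) = d - 1 - k by omega]
    ring
  rw [hsum, Nat.add_sub_cancel_left]
  linear_combination -y ^ p * geom_sum₂_mul y x d

theorem alternant_succ (x : Fin (n + 1) → R) {a : Fin (n + 1) → ℕ} (ha : Monotone a) :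
    alternant x a = x 0 ^ a 0 * ((∏ i : Fin n, (x i.succ - x 0)) *
      ∑ b ∈ interlacing a,
        (∏ j, x 0 ^ (a j.succ - 1 - b j)) * alternant (fun i => x i.succ) b) := by
  have hle (j : Fin n) : a j.castSucc ≤ a j.succ := ha j.castSucc_lt_succ.le
  rw [alternant, det_eq_mul_det_of_row_zero_eq_mul _
    (fun j => x 0 ^ (a j.succ - a j.castSucc)) fun j => ?_]
  · simp only [Matrix.of_apply, pow_sub_pow_mul_pow_eq_mul_sum_Ico _ _ (hle _)]
    have hcol := Matrix.det_mul_column (fun i : Fin n => x i.succ - x 0) <| Matrix.of fun i j =>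
      ∑ t ∈ Finset.Ico (a j.castSucc) (a j.succ), x 0 ^ (a j.succ - 1 - t) * x i.succ ^ t
    rw [det_of_sum_col] at hcol
    refine congrArg (x 0 ^ a 0 * ·) (hcol.trans ?_)
    refine congrArg _ (Finset.sum_congr rfl fun b _ => ?_)
    exact Matrix.det_mul_row (fun j => x 0 ^ (a j.succ - 1 - b j)) <|
      Matrix.of fun i j => x i.succ ^ b j
  · simp only [Matrix.of_apply, ← pow_add, Nat.sub_add_cancel (hle j)]

theorem alternant_eq_schur_mul_det_vandermonde (x : Fin n → R) {a : Fin n → ℕ}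
    (ha : Monotone a) : alternant x a = schur x a * (Matrix.vandermonde x).det := by
  induction n with
  | zero => simp [alternant, schur]
  | succ n ih =>
    rw [alternant_succ x ha, schur, det_vandermonde_succ, Finset.sum_congr rfl fun b hb => by
      rw [ih _ (strictMono_of_mem_interlacing ha hb).monotone, ← mul_assoc], ← Finset.sum_mul]
    ring

end Branching

section DividedDifference

variable {R : Type*} [CommRing R] {n : ℕ}

/-- Up to the sign `(-1) ^ n`, the divided difference `f[y_0, …, y_n]` multiplied by the Vandermonde
determinant of the nodes `y`; here `f` is given by its values at the nodes. -/
def dividedDiffNum (y f : Fin (n + 1) → R) : R :=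
  ∑ i : Fin (n + 1), (-1) ^ (i : ℕ) * f i * (Matrix.vandermonde fun k => y (i.succAbove k)).det

theorem dividedDiffNum_sub_mul (y f : Fin (n + 2) → R) :
    dividedDiffNum y (fun i => (y i - y 0) * f i) =
      -((∏ i : Fin (n + 1), (y i.succ - y 0)) *
        dividedDiffNum (fun i => y i.succ) fun i => f i.succ) := by
  rw [dividedDiffNum, Fin.sum_univ_succ, dividedDiffNum, Finset.mul_sum, ← Finset.sum_neg_distrib,
    sub_self, zero_mul, mul_zero, zero_mul, zero_add]
  refine Finset.sum_congr rfl fun i _ => ?_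
  rw [det_vandermonde_succ, Fin.prod_univ_succAbove _ i]
  simp only [Fin.succ_succAbove_zero, Fin.succ_succAbove_succ, Fin.val_succ]
  ring

theorem dividedDiffNum_mul (y f : Fin (n + 2) → R) :
    dividedDiffNum y (fun i => y i * f i) =
      y 0 * dividedDiffNum y f - (∏ i : Fin (n + 1), (y i.succ - y 0)) *
        dividedDiffNum (fun i => y i.succ) fun i => f i.succ := by
  rw [sub_eq_add_neg, ← dividedDiffNum_sub_mul, dividedDiffNum, dividedDiffNum, dividedDiffNum,
    Finset.mul_sum, ← Finset.sum_add_distrib]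
  exact Finset.sum_congr rfl fun i _ => by ring

end DividedDifference

section Staircase

/-- The increasing sequence `0, 2, …, 2m, 2m + 1, 2m + 2, 2m + 4, …` of the even numbers and
`2m + 1`. Its first `m + 3` terms are the exponents of the alternant for the partition `α` in
`m + 3` variables. -/
def evensWithOdd (m j : ℕ) : ℕ :=
  if j ≤ m then 2 * j else if j = m + 1 then 2 * m + 1 else 2 * (j - 1)

theorem monotone_evensWithOdd (m : ℕ) : Monotone (evensWithOdd m) :=
  monotone_nat_of_le_succ fun j => by grind [evensWithOdd]

theorem evensWithOdd_succAbove {n m : ℕ} (hm : m < n) (j : Fin n) :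
    evensWithOdd m ((⟨m + 1, by omega⟩ : Fin (n + 1)).succAbove j) = 2 * j := by
  grind [evensWithOdd, Fin.succAbove, Fin.lt_def]

variable {R : Type*} [CommRing R]

theorem alternant_evensWithOdd {n m : ℕ} (hm : m < n) (x : Fin (n + 1) → R) :
    alternant x (fun j => evensWithOdd m j) =
      (-1) ^ (m + 1) * dividedDiffNum (fun i => x i ^ 2) fun i => x i ^ (2 * m + 1) := by
  rw [alternant, Matrix.det_succ_column _ ⟨m + 1, by omega⟩, dividedDiffNum, Finset.mul_sum]
  refine Finset.sum_congr rfl fun i _ => ?_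
  have hminor : ((Matrix.of fun (i j : Fin (n + 1)) => x i ^ evensWithOdd m j).submatrix
      i.succAbove (Fin.succAbove ⟨m + 1, by omega⟩)).det =
      (Matrix.vandermonde fun k => x (i.succAbove k) ^ 2).det := by
    simp only [det_vandermonde_sq, alternant, Matrix.submatrix, Matrix.of_apply,
      evensWithOdd_succAbove hm]
  rw [hminor, Matrix.of_apply, show evensWithOdd m (m + 1) = 2 * m + 1 by simp [evensWithOdd]]
  ring

theorem alternant_evensWithOdd_succ {n m : ℕ} (hm : m < n) (x : Fin (n + 2) → R) :
    alternant x (fun j => evensWithOdd (m + 1) j) =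
      (∏ i : Fin (n + 1), (x i.succ ^ 2 - x 0 ^ 2)) *
          alternant (fun i => x i.succ) (fun j => evensWithOdd m j) -
        x 0 ^ 2 * alternant x (fun j => evensWithOdd m j) := by
  have hpow (i : Fin (n + 2)) : x i ^ (2 * (m + 1) + 1) = x i ^ 2 * x i ^ (2 * m + 1) := by ring
  rw [alternant_evensWithOdd (by omega), alternant_evensWithOdd hm,
    alternant_evensWithOdd (by omega)]
  simp only [hpow, dividedDiffNum_mul (fun i => x i ^ 2)]
  ring

theorem exists_mem_det_vandermonde_sq_sub_eq_mul (P : Subsemiring R) {m : ℕ}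
    {x : Fin (m + 3) → R} (hx : ∀ i, x i ∈ P) :
    ∃ Q ∈ P, (Matrix.vandermonde fun i => x i ^ 2).det -
        (x ⟨m + 1, by omega⟩ * x ⟨m + 2, by omega⟩ ^ 2 +
          x ⟨m + 1, by omega⟩ ^ 2 * x ⟨m + 2, by omega⟩) *
          alternant x (fun j => evensWithOdd m j) =
      Q * (Matrix.vandermonde x).det := by
  induction m with
  | zero =>
    refine ⟨(x 1 + x 2) * (x 0 * (x 0 + x 1 + x 2)), P.mul_mem (P.add_mem (hx _) (hx _)) <|
      P.mul_mem (hx _) (P.add_mem (P.add_mem (hx _) (hx _)) (hx _)), ?_⟩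
    simp [Matrix.det_fin_three, alternant, evensWithOdd, Matrix.vandermonde_apply]
    ring
  | succ m ih =>
    obtain ⟨Q, hQ, ih⟩ := ih fun i => hx i.succ
    simp only [Fin.succ_mk] at ih
    set u := x ⟨m + 1 + 1, by omega⟩
    set v := x ⟨m + 2 + 1, by omega⟩
    set s := ∏ i : Fin (m + 3), (x i.succ + x 0)
    have hw : u * v ^ 2 + u ^ 2 * v ∈ P := P.add_mem (P.mul_mem (hx _) (P.pow_mem (hx _) _))
      (P.mul_mem (P.pow_mem (hx _) _) (hx _))
    have hprod : ∏ i : Fin (m + 3), (x i.succ ^ 2 - x 0 ^ 2) =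
        s * ∏ i : Fin (m + 3), (x i.succ - x 0) := by
      simp only [sq_sub_sq, Finset.prod_mul_distrib, s]
    refine ⟨s * Q + (u * v ^ 2 + u ^ 2 * v) * (x 0 ^ 2 * schur x fun j => evensWithOdd m j),
      P.add_mem (P.mul_mem (P.prod_mem fun i _ => P.add_mem (hx _) (hx _)) hQ) <|
        P.mul_mem hw (P.mul_mem (P.pow_mem (hx _) _) (schur_mem P hx _)), ?_⟩
    rw [det_vandermonde_succ fun i => x i ^ 2, alternant_evensWithOdd_succ (by omega),
      alternant_eq_schur_mul_det_vandermonde x (a := fun j => evensWithOdd m j)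
        ((monotone_evensWithOdd m).comp Fin.val_strictMono.monotone),
      hprod, det_vandermonde_succ x]
    linear_combination s * (∏ i : Fin (m + 3), (x i.succ - x 0)) * ih

theorem stmt_7_general (P : Subsemiring R) (m : ℕ) (x : Fin (m + 3) → R) (hx : ∀ i, x i ∈ P) :
    ∃ Q ∈ P,
      alternant x (fun j => (m + 2 - (j : ℕ)) + (m + 2 - (j : ℕ))) -
          (x ⟨m + 1, by omega⟩ * x ⟨m + 2, by omega⟩ ^ 2 +
            x ⟨m + 1, by omega⟩ ^ 2 * x ⟨m + 2, by omega⟩) *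
          alternant x (fun j => (if (j : ℕ) ≤ 2 then m else m + 2 - (j : ℕ)) + (m + 2 - (j : ℕ))) =
        Q * alternant x (fun j => m + 2 - (j : ℕ)) := by
  have hδ (j : Fin (m + 3)) : (m + 2 - (j : ℕ)) + (m + 2 - (j : ℕ)) = 2 * j.rev := by grind
  have hα (j : Fin (m + 3)) :
      (if (j : ℕ) ≤ 2 then m else m + 2 - (j : ℕ)) + (m + 2 - (j : ℕ)) =
        evensWithOdd m j.rev := by
    grind [evensWithOdd]
  have hρ (j : Fin (m + 3)) : m + 2 - (j : ℕ) = j.rev := by grind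
  obtain ⟨Q, hQ, h⟩ := exists_mem_det_vandermonde_sq_sub_eq_mul P hx
  refine ⟨Q, hQ, ?_⟩
  rw [alternant_eq_sign_revPerm_mul x (a := fun j => 2 * j) hδ,
    alternant_eq_sign_revPerm_mul x (a := fun j => evensWithOdd m j) hα,
    alternant_eq_sign_revPerm_mul x (a := fun j => j) hρ, ← det_vandermonde_sq,
    show alternant x (fun j => j) = (Matrix.vandermonde x).det from rfl]
  linear_combination (Equiv.Perm.sign (Fin.revPerm (n := m + 3)) : ℤ) * h

end Staircase

/-- For `l ≥ 3`, with `δ = (l-1, l-2, …, 1, 0)` and `α = (l-3, l-3, l-3, l-4, …, 1, 0)`,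
the difference `s_δ(x) - (x_{l-1} x_l² + x_{l-1}² x_l) s_α(x)` is a polynomial with nonnegative
coefficients; equivalently (clearing the common Vandermonde denominator of the bialternant
formula), `det(x_i^{δ_j + l-1-j}) - (x_{l-1} x_l² + x_{l-1}² x_l) det(x_i^{α_j + l-1-j})
= Q · det(x_i^{l-1-j})` for some `Q` with nonnegative coefficients. -/
theorem stmt_7 (l : ℕ) (hl : 3 ≤ l) :
    ∃ Q : MvPolynomial (Fin l) ℤ,
      (∀ m : Fin l →₀ ℕ, 0 ≤ Q.coeff m) ∧
      Matrix.det (Matrix.of fun i j : Fin l =>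
            (X i : MvPolynomial (Fin l) ℤ) ^ ((l - 1 - (j : ℕ)) + (l - 1 - (j : ℕ))))
          - (X (⟨l - 2, by omega⟩ : Fin l) * X (⟨l - 1, by omega⟩ : Fin l) ^ 2
              + X (⟨l - 2, by omega⟩ : Fin l) ^ 2 * X (⟨l - 1, by omega⟩ : Fin l))
            * Matrix.det (Matrix.of fun i j : Fin l =>
                (X i : MvPolynomial (Fin l) ℤ)
                  ^ ((if (j : ℕ) ≤ 2 then l - 3 else l - 1 - (j : ℕ)) + (l - 1 - (j : ℕ))))
        = Q * Matrix.det (Matrix.of fun i j : Fin l =>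
            (X i : MvPolynomial (Fin l) ℤ) ^ (l - 1 - (j : ℕ))) := by
  obtain ⟨m, rfl⟩ := Nat.exists_eq_add_of_le' hl
  obtain ⟨_, ⟨q, rfl⟩, h⟩ := stmt_7_general (map (Nat.castRingHom ℤ)).rangeS m X
    fun i => ⟨X i, map_X _ i⟩
  exact ⟨_, fun k => by simp only [coeff_map, eq_natCast, Nat.cast_nonneg], h⟩
end
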